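/- arXiv:1701.01971 — 3 statements merged into one kernel-verified Lean document; each statement's English description precedes it below -/
import Mathlib

section
/- For every weak alternating automaton 𝒜 over an alphabet A with state set Q there exist a backward deterministic automaton ℬ over A and an output function λ from the states of ℬ to subsets of Q such that f_𝒜 = f_{ℬ,λ}. Moreover: (1) if S₀, …, S_{k−1} are the strongly connected components of the transition graph of 𝒜 and m_i = |S_i|, then ℬ has at most ∏_{i<k} (m_i + 1)^{m_i} states; in particular ℬ has at most (n+1)^n states where n = |Q|; and (2) the recurrence condition of ℬ is a generalized transition Büchi condition with at most n transition sets. -/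
/-- Transition conditions over state set `Q` and alphabet `A`: built from atoms `B ⊆ A`
and `○q` for `q ∈ Q` using disjunction and conjunction. -/
inductive TCond (Q : Type*) (A : Type*) : Type _ where
  | atom : Set A → TCond Q A
  | next : Q → TCond Q A
  | or   : TCond Q A → TCond Q A → TCond Q A
  | and  : TCond Q A → TCond Q A → TCond Q A

namespace TCond

/-- `○q` occurs in the transition condition. -/
def NextOccurs {Q A : Type*} : TCond Q A → Q → Prop
  | atom _, _ => False
  | next q', q => q' = q
  | or τ₀ τ₁, q => τ₀.NextOccurs q ∨ τ₁.NextOccurs q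
  | and τ₀ τ₁, q => τ₀.NextOccurs q ∨ τ₁.NextOccurs q

/-- The subformula relation on transition conditions. -/
inductive Subf {Q A : Type*} : TCond Q A → TCond Q A → Prop
  | refl (τ : TCond Q A) : Subf τ τ
  | orL {χ τ₀ τ₁} : Subf χ τ₀ → Subf χ (or τ₀ τ₁)
  | orR {χ τ₀ τ₁} : Subf χ τ₁ → Subf χ (or τ₀ τ₁)
  | andL {χ τ₀ τ₁} : Subf χ τ₀ → Subf χ (and τ₀ τ₁)
  | andR {χ τ₀ τ₁} : Subf χ τ₁ → Subf χ (and τ₀ τ₁)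

end TCond

/-- A weak alternating automaton over the alphabet `A` with state set `Q`:
a transition function `δ` and a partition of the states into recurring states
(the set `recurring`) and non-recurring states (its complement), such that any two states
in the same strongly connected component of the transition graph are both recurring or
both non-recurring. -/
structure WAA (Q : Type*) (A : Type*) where
  δ : Q → TCond Q A
  recurring : Set Q
  weak : ∀ q q',
    Relation.ReflTransGen (fun x y => (δ x).NextOccurs y) q q' →
    Relation.ReflTransGen (fun x y => (δ x).NextOccurs y) q' q →
    (q ∈ recurring ↔ q' ∈ recurring)

namespace WAA

variable {Q A : Type*}

/-- The edge relation of the transition graph of a weak alternating automaton. -/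
def Edge (M : WAA Q A) (q q' : Q) : Prop := (M.δ q).NextOccurs q'

/-- `q` and `q'` lie in the same strongly connected component of the transition graph. -/
def Conn (M : WAA Q A) (q q' : Q) : Prop :=
  Relation.ReflTransGen M.Edge q q' ∧ Relation.ReflTransGen M.Edge q' q

/-- Vertices of run graphs: pairs of a position and either a state or a transition
condition. -/
abbrev Vert (Q A : Type*) := ℕ × (Q ⊕ TCond Q A)

/-- A run graph of a weak alternating automaton on an ω-word `u`. -/
structure RunGraph (M : WAA Q A) (u : ℕ → A) where
  V : Set (Vert Q A)
  E : Vert Q A → Vert Q A → Prop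
  edge_mem : ∀ ⦃v w⦄, E v w → v ∈ V ∧ w ∈ V
  /-- every transition-condition vertex carries a subformula of some `δ q` -/
  cond_subf : ∀ i τ, (i, Sum.inr τ) ∈ V → ∃ q, TCond.Subf τ (M.δ q)
  /-- a state vertex has exactly one outgoing edge, to `⟨i, δ q⟩` -/
  state_succ : ∀ i q, (i, Sum.inl q) ∈ V →
    ∀ w, E (i, Sum.inl q) w ↔ w = (i, Sum.inr (M.δ q))
  /-- a `○q` vertex has exactly one outgoing edge, to `⟨i+1, q⟩` -/
  next_succ : ∀ i q, (i, Sum.inr (TCond.next q)) ∈ V →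
    ∀ w, E (i, Sum.inr (TCond.next q)) w ↔ w = (i + 1, Sum.inl q)
  /-- a disjunction vertex has outgoing edges only to the disjuncts, and at least one -/
  or_succ_subset : ∀ i τ₀ τ₁, (i, Sum.inr (TCond.or τ₀ τ₁)) ∈ V →
    ∀ w, E (i, Sum.inr (TCond.or τ₀ τ₁)) w → w = (i, Sum.inr τ₀) ∨ w = (i, Sum.inr τ₁)
  or_succ_exists : ∀ i τ₀ τ₁, (i, Sum.inr (TCond.or τ₀ τ₁)) ∈ V →
    ∃ w, E (i, Sum.inr (TCond.or τ₀ τ₁)) w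
  /-- a conjunction vertex has outgoing edges exactly to the two conjuncts -/
  and_succ : ∀ i τ₀ τ₁, (i, Sum.inr (TCond.and τ₀ τ₁)) ∈ V →
    ∀ w, E (i, Sum.inr (TCond.and τ₀ τ₁)) w ↔ (w = (i, Sum.inr τ₀) ∨ w = (i, Sum.inr τ₁))
  /-- atom vertices have no outgoing edges -/
  atom_succ : ∀ i B w, ¬ E (i, Sum.inr (TCond.atom B)) w
  /-- there is no vertex `⟨i, B⟩` with `u i ∉ B` -/
  atom_ok : ∀ i B, (i, Sum.inr (TCond.atom B)) ∈ V → u i ∈ B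

/-- A run graph is final if on every infinite path, every state occurring infinitely
often (as the second component of vertices of the path) is recurring. -/
def RunGraph.Final {M : WAA Q A} {u : ℕ → A} (G : RunGraph M u) : Prop :=
  ∀ p : ℕ → Vert Q A, (∀ n, G.E (p n) (p (n + 1))) →
    ∀ q : Q, (∀ m, ∃ n, m ≤ n ∧ (p n).2 = Sum.inl q) → q ∈ M.recurring

/-- The suffix `u[i,ω)` is accepted from state `q` if some final run graph on `u`
contains the vertex `⟨i, q⟩`. -/
def AcceptsFrom (M : WAA Q A) (u : ℕ → A) (i : ℕ) (q : Q) : Prop :=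
  ∃ G : RunGraph M u, G.Final ∧ (i, Sum.inl q) ∈ G.V

end WAA

/-- A (backward) run of a backward deterministic automaton with transition function `ρ`
on the ω-word `u`: `r i = ρ (u i) (r (i+1))` for all `i`. -/
def IsBackRun {P A : Type*} (ρ : A → P → P) (u : ℕ → A) (r : ℕ → P) : Prop :=
  ∀ i, r i = ρ (u i) (r (i + 1))

/-- A run is final for the generalized transition Büchi condition `T` if for every `j`
the run uses a transition from `T j` infinitely often. -/
def GTBFinal {P A : Type*} {k : ℕ} (T : Fin k → Set (P × A × P)) (u : ℕ → A)
    (r : ℕ → P) : Prop :=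
  ∀ j : Fin k, ∀ m : ℕ, ∃ i, m ≤ i ∧ (r i, u i, r (i + 1)) ∈ T j

/-- `S` is an enumeration of all strongly connected components of the transition graph
of `M`: the `S j` partition the state set and each `S j` is exactly one
SCC (the equivalence class of any of its elements under mutual reachability). -/
def IsSCCEnum {Q A : Type*} (M : WAA Q A) {l : ℕ} (S : Fin l → Finset Q) : Prop :=
  (∀ q : Q, ∃! j : Fin l, q ∈ S j) ∧
  (∀ (j : Fin l) (q q' : Q), q ∈ S j → (q' ∈ S j ↔ M.Conn q q'))

section BDAbstract

variable {Q : Type*}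

noncomputable def bdCnt (D : Set (Set Q)) (q : Q) : ℕ := Set.ncard {Y | Y ∈ D ∧ q ∈ Y}

def bdLvl (g : Q → ℕ) (k : ℕ) : Set Q := {p | k < g p}

def bdCh (g : Q → ℕ) : Set (Set Q) := Set.range (bdLvl g)

noncomputable def bdStp (F : Set Q → Set Q) (g : Q → ℕ) : Q → ℕ := bdCnt (F '' bdCh g)

def bdPhi (F : ℕ → Set Q → Set Q) : ℕ → ℕ → Set Q → Set Q
  | _, 0, X => X
  | i, n + 1, X => F i (bdPhi F (i + 1) n X)

def bdD (F : ℕ → Set Q → Set Q) (i : ℕ) : Set (Set Q) := Set.range (fun n => bdPhi F i n ∅)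

def bdIsCh (D : Set (Set Q)) : Prop := ∀ Y ∈ D, ∀ Z ∈ D, Y ⊆ Z ∨ Z ⊆ Y

theorem bdLvl_anti (g : Q → ℕ) {k l : ℕ} (h : k ≤ l) : bdLvl g l ⊆ bdLvl g k :=
  fun _ hp => lt_of_le_of_lt h hp

theorem bdCh_chain (F : Set Q → Set Q) (hF : Monotone F) (g : Q → ℕ) :
    bdIsCh (F '' bdCh g) := by
  rintro _ ⟨_, ⟨k, rfl⟩, rfl⟩ _ ⟨_, ⟨l, rfl⟩, rfl⟩
  rcases le_total k l with h | h
  · exact Or.inr (hF (bdLvl_anti g h))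
  · exact Or.inl (hF (bdLvl_anti g h))

theorem bdCnt_insert (D : Set (Set Q)) : bdCnt (insert ∅ D) = bdCnt D := by
  funext q
  unfold bdCnt
  congr 1
  ext Y
  constructor
  · rintro ⟨rfl | h, hq⟩
    · exact absurd hq (Set.notMem_empty q)
    · exact ⟨h, hq⟩
  · rintro ⟨h, hq⟩
    exact ⟨Or.inr h, hq⟩

theorem bdCnt_congr {D D' : Set (Set Q)} (h : insert ∅ D = insert ∅ D') :
    bdCnt D = bdCnt D' := by
  rw [← bdCnt_insert D, h, bdCnt_insert]

variable [Finite Q]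

theorem bdL1 {D : Set (Set Q)} (hD : bdIsCh D) {Y : Set Q} (hY : Y ∈ D) :
    Y = bdLvl (bdCnt D) (Set.ncard {Z | Z ∈ D ∧ Y ⊂ Z}) := by
  ext q
  constructor
  · intro hq
    refine Set.ncard_lt_ncard ?_ (Set.toFinite _)
    refine ⟨fun Z hZ => ⟨hZ.1, hZ.2.1 hq⟩, fun h => ?_⟩
    exact (h (show Y ∈ {Y | Y ∈ D ∧ q ∈ Y} from ⟨hY, hq⟩)).2.2 subset_rfl
  · intro hq
    by_contra hn
    have hq' : _ < bdCnt D q := hq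
    refine absurd hq' (not_lt.mpr ?_)
    refine Set.ncard_le_ncard ?_ (Set.toFinite _)
    rintro Z ⟨hZ, hqZ⟩
    refine ⟨hZ, ?_⟩
    rcases hD Y hY Z hZ with h | h
    · exact ⟨h, fun h' => hn (h' hqZ)⟩
    · exact absurd (h hqZ) hn

theorem bdL2 {D : Set (Set Q)} (hD : bdIsCh D) (k : ℕ) :
    bdLvl (bdCnt D) k ∈ insert ∅ D := by
  rcases Set.eq_empty_or_nonempty (bdLvl (bdCnt D) k) with h | h
  · rw [h]; exact Or.inl rfl
  right
  obtain ⟨q, hq, hmin⟩ := Set.exists_min_image _ (bdCnt D) (Set.toFinite _) h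
  have hne : {Y | Y ∈ D ∧ q ∈ Y}.Nonempty := by
    have : 0 < bdCnt D q := lt_of_le_of_lt (Nat.zero_le _) hq
    exact (Set.ncard_pos (Set.toFinite _)).1 this
  obtain ⟨Y, ⟨hY, hqY⟩, hYm⟩ := Set.exists_min_image _ Set.ncard (Set.toFinite _) hne
  have hYle : ∀ Z ∈ D, q ∈ Z → Y ⊆ Z := by
    intro Z hZ hqZ
    rcases hD Y hY Z hZ with h | h
    · exact h
    · rw [Set.eq_of_subset_of_ncard_le h (hYm Z ⟨hZ, hqZ⟩) (Set.toFinite _)]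
  have : bdLvl (bdCnt D) k = Y := by
    ext p
    constructor
    · intro hp
      by_contra hn
      have h1 := hmin p hp
      refine absurd h1 (not_le.mpr ?_)
      refine Set.ncard_lt_ncard ?_ (Set.toFinite _)
      refine ⟨?_, fun h => hn (h (show Y ∈ {Y | Y ∈ D ∧ q ∈ Y} from ⟨hY, hqY⟩)).2⟩
      rintro Z ⟨hZ, hpZ⟩
      refine ⟨hZ, ?_⟩
      rcases hD Y hY Z hZ with h | h
      · exact h hqY
      · exact absurd (h hpZ) hn
    · intro hp
      have hq' : k < bdCnt D q := hq
      refine lt_of_lt_of_le (b := bdCnt D q) hq' ?_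
      refine Set.ncard_le_ncard ?_ (Set.toFinite _)
      rintro Z ⟨hZ, hqZ⟩
      exact ⟨hZ, hYle Z hZ hqZ hp⟩
  rw [this]; exact hY

theorem bdLvl_top (g : Q → ℕ) : ∃ k, bdLvl g k = ∅ := by
  obtain ⟨k, hk⟩ := (Set.finite_range g).bddAbove
  exact ⟨k, Set.eq_empty_of_forall_notMem fun p hp => absurd (hk ⟨p, rfl⟩) (not_le.mpr hp)⟩

theorem bdCh_cnt {D : Set (Set Q)} (hD : bdIsCh D) : bdCh (bdCnt D) = insert ∅ D := by
  apply Set.Subset.antisymm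
  · rintro _ ⟨k, rfl⟩
    exact bdL2 hD k
  · rintro Y (rfl | hY)
    · obtain ⟨k, hk⟩ := bdLvl_top (bdCnt D)
      exact ⟨k, hk⟩
    · exact ⟨_, (bdL1 hD hY).symm⟩

theorem bdL3 {D : Set (Set Q)} (hD : bdIsCh D) {c : Set Q} (hc : ∀ Y ∈ D, Y ⊆ c) (q : Q) :
    bdCnt D q ≤ c.ncard := by
  have : bdCnt D q ≤ (Set.Icc 1 c.ncard).ncard := by
    refine Set.ncard_le_ncard_of_injOn Set.ncard ?_ ?_ (Set.toFinite _)
    · rintro Y ⟨hY, hq⟩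
      exact ⟨(Set.ncard_pos (Set.toFinite _)).2 ⟨q, hq⟩,
        Set.ncard_le_ncard (hc Y hY) (Set.toFinite _)⟩
    · rintro Y ⟨hY, hq⟩ Z ⟨hZ, hqZ⟩ h
      rcases hD Y hY Z hZ with h' | h'
      · exact Set.eq_of_subset_of_ncard_le h' h.ge (Set.toFinite _)
      · exact (Set.eq_of_subset_of_ncard_le h' h.le (Set.toFinite _)).symm
  simpa [Set.ncard_eq_toFinset_card'] using this

/-- number of strictly larger images -/
theorem bdPos (F : Set Q → Set Q) (hF : Monotone F) (g : Q → ℕ) (k : ℕ) :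
    ∃ k' ≤ k, F (bdLvl g k) = bdLvl (bdStp F g) k' := by
  refine ⟨_, ?_, bdL1 (bdCh_chain F hF g) (Y := F (bdLvl g k)) ⟨_, ⟨k, rfl⟩, rfl⟩⟩
  have hs : {Z | Z ∈ F '' bdCh g ∧ F (bdLvl g k) ⊂ Z} ⊆
      (fun l => F (bdLvl g l)) '' (Set.Iio k) := by
    rintro _ ⟨⟨_, ⟨l, rfl⟩, rfl⟩, h⟩
    refine ⟨l, ?_, rfl⟩
    by_contra hl
    exact h.2 (hF (bdLvl_anti g (not_lt.mp hl)))
  calc _ ≤ _ := Set.ncard_le_ncard hs (Set.toFinite _)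
    _ ≤ _ := Set.ncard_image_le (Set.finite_Iio k)
    _ = k := by simp [Set.ncard_eq_toFinset_card']

theorem bdPosT (F : Set Q → Set Q) (hF : Monotone F) (g : Q → ℕ)
    (hT : F (bdLvl g 0) = F (bdLvl g 1)) (k : ℕ) :
    ∃ k' ≤ k, F (bdLvl g (k + 1)) = bdLvl (bdStp F g) k' := by
  refine ⟨_, ?_, bdL1 (bdCh_chain F hF g) (Y := F (bdLvl g (k + 1))) ⟨_, ⟨k + 1, rfl⟩, rfl⟩⟩
  have hs : {Z | Z ∈ F '' bdCh g ∧ F (bdLvl g (k + 1)) ⊂ Z} ⊆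
      (fun l => F (bdLvl g (l + 1))) '' (Set.Iio k) := by
    rintro _ ⟨⟨_, ⟨l, rfl⟩, rfl⟩, h⟩
    have hl : l < k + 1 := by
      by_contra hl
      exact h.2 (hF (bdLvl_anti g (not_lt.mp hl)))
    rcases l with _ | l
    · rw [hT] at h
      refine ⟨0, ?_, hT.symm⟩
      show 0 < k
      by_contra h0
      have : k = 0 := by omega
      subst this
      exact h.2 subset_rfl
    · exact ⟨l, by show l < k; omega, rfl⟩
  calc _ ≤ _ := Set.ncard_le_ncard hs (Set.toFinite _)
    _ ≤ _ := Set.ncard_image_le (Set.finite_Iio k)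
    _ = k := by simp [Set.ncard_eq_toFinset_card']

theorem bdPos0 (F : Set Q → Set Q) (hF : Monotone F) (g : Q → ℕ) :
    F (bdLvl g 0) = bdLvl (bdStp F g) 0 := by
  obtain ⟨k', h, h'⟩ := bdPos F hF g 0
  obtain rfl : k' = 0 := by omega
  exact h'

theorem bdPos1 (F : Set Q → Set Q) (hF : Monotone F) (g : Q → ℕ)
    (hT : F (bdLvl g 0) ≠ F (bdLvl g 1)) :
    F (bdLvl g 1) = bdLvl (bdStp F g) 1 := by
  obtain ⟨k', h, h'⟩ := bdPos F hF g 1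
  rcases k' with _ | k'
  · rw [← bdPos0 F hF g] at h'
    exact absurd h'.symm hT
  · obtain rfl : k' = 0 := by omega
    exact h'

omit [Finite Q] in
theorem bdPhi_mono (F : ℕ → Set Q → Set Q) (hF : ∀ i, Monotone (F i)) (n : ℕ) :
    ∀ i, Monotone (bdPhi F i n) := by
  induction n with
  | zero => intro i X Y h; exact h
  | succ n ih => intro i X Y h; exact hF i (ih (i + 1) h)

omit [Finite Q] in
theorem bdPhi_add (F : ℕ → Set Q → Set Q) (n : ℕ) : ∀ i m X,
    bdPhi F i (n + m) X = bdPhi F i n (bdPhi F (i + n) m X) := by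
  induction n with
  | zero => intro i m X; simp [bdPhi]
  | succ n ih =>
    intro i m X
    rw [show n + 1 + m = (n + m) + 1 by omega]
    simp only [bdPhi]
    rw [ih, show i + 1 + n = i + (n + 1) by omega]

omit [Finite Q] in
theorem bdPhi_le (F : ℕ → Set Q → Set Q) (hF : ∀ i, Monotone (F i)) (i : ℕ) :
    Monotone (fun n => bdPhi F i n ∅) := by
  intro n n' h
  obtain ⟨m, rfl⟩ := Nat.exists_eq_add_of_le h
  show bdPhi F i n ∅ ⊆ bdPhi F i (n + m) ∅
  rw [bdPhi_add]
  exact bdPhi_mono F hF n i (Set.empty_subset _)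

omit [Finite Q] in
theorem bdD_chain (F : ℕ → Set Q → Set Q) (hF : ∀ i, Monotone (F i)) (i : ℕ) :
    bdIsCh (bdD F i) := by
  rintro _ ⟨n, rfl⟩ _ ⟨m, rfl⟩
  rcases le_total n m with h | h
  · exact Or.inl (bdPhi_le F hF i h)
  · exact Or.inr (bdPhi_le F hF i h)

omit [Finite Q] in
theorem bdD_succ (F : ℕ → Set Q → Set Q) (i : ℕ) :
    bdD F i = insert ∅ (F i '' bdD F (i + 1)) := by
  ext Y
  constructor
  · rintro ⟨n, rfl⟩
    rcases n with _ | n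
    · exact Or.inl rfl
    · exact Or.inr ⟨_, ⟨n, rfl⟩, rfl⟩
  · rintro (rfl | ⟨_, ⟨n, rfl⟩, rfl⟩)
    · exact ⟨0, rfl⟩
    · exact ⟨n + 1, rfl⟩

theorem bdStab (F : ℕ → Set Q → Set Q) (hF : ∀ i, Monotone (F i)) (i : ℕ) :
    ∃ N, ∀ n, bdPhi F i n ∅ ⊆ bdPhi F i N ∅ := by
  obtain ⟨N, hN⟩ := WellFoundedGT.monotone_chain_condition ⟨_, bdPhi_le F hF i⟩
  refine ⟨N, fun n => ?_⟩
  rcases le_total N n with h | h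
  · exact (hN n h).ge
  · exact bdPhi_le F hF i h

/-- canonical count -/
noncomputable def bdCan (F : ℕ → Set Q → Set Q) (i : ℕ) : Q → ℕ := bdCnt (bdD F i)

theorem bdCan_ch (F : ℕ → Set Q → Set Q) (hF : ∀ i, Monotone (F i)) (i : ℕ) :
    bdCh (bdCan F i) = bdD F i := by
  rw [bdCan, bdCh_cnt (bdD_chain F hF i)]
  exact Set.insert_eq_of_mem ⟨0, rfl⟩

theorem bdCan_step (F : ℕ → Set Q → Set Q) (hF : ∀ i, Monotone (F i)) (i : ℕ) :
    bdCan F i = bdStp (F i) (bdCan F (i + 1)) := by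
  rw [bdStp, bdCan_ch F hF, bdCan, bdD_succ, bdCnt_insert]

theorem bdCan_pos (F : ℕ → Set Q → Set Q) (i : ℕ) (q : Q) :
    0 < bdCan F i q ↔ ∃ n, q ∈ bdPhi F i n ∅ := by
  rw [bdCan, bdCnt, Set.ncard_pos (Set.toFinite _)]
  constructor
  · rintro ⟨_, ⟨n, rfl⟩, h⟩
    exact ⟨n, h⟩
  · rintro ⟨n, h⟩
    exact ⟨_, ⟨n, rfl⟩, h⟩

theorem bdCan_T (F : ℕ → Set Q → Set Q) (hF : ∀ i, Monotone (F i)) (m : ℕ) :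
    ∃ i, m ≤ i ∧ F i (bdLvl (bdCan F (i + 1)) 0) = F i (bdLvl (bdCan F (i + 1)) 1) := by
  by_contra hcon
  push Not at hcon
  have h1 : ∀ n i, m ≤ i →
      bdPhi F i n (bdLvl (bdCan F (i + n)) 1) = bdLvl (bdCan F i) 1 := by
    intro n
    induction n with
    | zero => intro i _; rfl
    | succ n ih =>
      intro i hi
      have := ih (i + 1) (by omega)
      rw [show i + 1 + n = i + (n + 1) by omega] at this
      rw [bdPhi, this, bdPos1 (F i) (hF i) _ (hcon i hi), ← bdCan_step F hF]
  obtain ⟨N, hN⟩ := bdStab F hF m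
  have h2 : bdLvl (bdCan F m) 0 ⊆ bdLvl (bdCan F m) 1 := by
    intro q hq
    obtain ⟨n, hn⟩ := (bdCan_pos F m q).1 hq
    rw [← h1 N m le_rfl]
    exact bdPhi_mono F hF N m (Set.empty_subset _) (hN n hn)
  apply hcon m le_rfl
  rw [bdPos1 (F m) (hF m) _ (hcon m le_rfl), bdPos0 (F m) (hF m), ← bdCan_step F hF]
  exact Set.Subset.antisymm h2 (bdLvl_anti _ (by omega))

/-- Uniqueness. -/
theorem bdUniq (F : ℕ → Set Q → Set Q) (hF : ∀ i, Monotone (F i)) (g : ℕ → Q → ℕ) (b : ℕ)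
    (hb : ∀ i q, g i q ≤ b) (hg : ∀ i, g i = bdStp (F i) (g (i + 1)))
    (hT : ∀ m, ∃ i, m ≤ i ∧ F i (bdLvl (g (i + 1)) 0) = F i (bdLvl (g (i + 1)) 1)) (i : ℕ) :
    g i = bdCan F i := by
  have pos : ∀ n i k, ∃ k' ≤ k, bdPhi F i n (bdLvl (g (i + n)) k) = bdLvl (g i) k' := by
    intro n
    induction n with
    | zero => intro i k; exact ⟨k, le_rfl, rfl⟩
    | succ n ih =>
      intro i k
      obtain ⟨k', hk, h⟩ := ih (i + 1) k
      rw [show i + 1 + n = i + (n + 1) by omega] at h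
      obtain ⟨k'', hk', h'⟩ := bdPos (F i) (hF i) (g (i + 1)) k'
      exact ⟨k'', by omega, by rw [bdPhi, h, h', ← hg]⟩
  have key : ∀ d i, ∃ N, ∀ n, N ≤ n → ∀ k ≤ d,
      bdPhi F i n (bdLvl (g (i + n)) k) = bdLvl (g i) 0 := by
    intro d
    induction d with
    | zero =>
      intro i
      refine ⟨0, fun n _ k hk => ?_⟩
      obtain ⟨k', hk', h⟩ := pos n i k
      obtain rfl : k' = 0 := by omega
      exact h
    | succ d ih =>
      intro i
      obtain ⟨N, hN⟩ := ih i
      obtain ⟨i', hi', hT'⟩ := hT (i + N)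
      obtain ⟨n', rfl⟩ := Nat.exists_eq_add_of_le (show i ≤ i' by omega)
      refine ⟨n' + 1, fun n hn k hk => ?_⟩
      obtain ⟨e, rfl⟩ := Nat.exists_eq_add_of_le hn
      rw [show n' + 1 + e = n' + (1 + e) by omega, bdPhi_add,
        show 1 + e = e + 1 by omega, bdPhi]
      obtain ⟨k', hk', h⟩ := pos e (i + n' + 1) k
      rw [show i + n' + 1 + e = i + (n' + (e + 1)) by omega] at h
      rw [h]
      have : ∃ k'' ≤ d, F (i + n') (bdLvl (g (i + n' + 1)) k') = bdLvl (g (i + n')) k'' := by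
        rcases k' with _ | k'
        · refine ⟨0, Nat.zero_le _, ?_⟩
          rw [bdPos0 _ (hF _), ← hg]
        · obtain ⟨k'', h1, h2⟩ := bdPosT _ (hF (i + n')) (g (i + n' + 1)) hT' k'
          refine ⟨k'', by omega, ?_⟩
          rw [h2, ← hg]
      obtain ⟨k'', h1, h2⟩ := this
      rw [h2]
      exact hN n' (by omega) k'' h1
  have hemp : ∀ i k, b ≤ k → bdLvl (g i) k = ∅ := fun i k hk =>
    Set.eq_empty_of_forall_notMem fun p hp => absurd (hb i p) (not_le.mpr (lt_of_le_of_lt hk hp))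
  have hCh : ∀ i, bdCh (g i) = insert ∅ (F i '' bdCh (g (i + 1))) := by
    intro i
    conv_lhs => rw [hg i]
    exact bdCh_cnt (bdCh_chain _ (hF i) _)
  have hsub : ∀ n i, ∀ Y ∈ bdCh (g i), Y ∈ bdD F i ∨
      ∃ k, Y = bdPhi F i n (bdLvl (g (i + n)) k) := by
    intro n
    induction n with
    | zero => rintro i _ ⟨k, rfl⟩; exact Or.inr ⟨k, rfl⟩
    | succ n ih =>
      intro i Y hY
      rw [hCh i] at hY
      rcases hY with rfl | ⟨Z, hZ, rfl⟩
      · exact Or.inl ⟨0, rfl⟩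
      · rcases ih (i + 1) Z hZ with h | ⟨k, h⟩
        · left; rw [bdD_succ]; exact Or.inr ⟨Z, h, rfl⟩
        · right; exact ⟨k, by rw [h, bdPhi, show i + 1 + n = i + (n + 1) by omega]⟩
  have hsup : ∀ n i, bdPhi F i n ∅ ∈ bdCh (g i) := by
    intro n
    induction n with
    | zero => intro i; rw [hCh i]; exact Or.inl rfl
    | succ n ih => intro i; rw [hCh i]; exact Or.inr ⟨_, ih (i + 1), rfl⟩
  have heq : ∀ i, bdCh (g i) = bdD F i := by
    intro i
    apply Set.Subset.antisymm
    · intro Y hY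
      obtain ⟨N, hN⟩ := key b i
      rcases hsub N i Y hY with h | ⟨k, h⟩
      · exact h
      · refine ⟨N, ?_⟩
        show bdPhi F i N ∅ = Y
        rw [h, ← hemp (i + N) b le_rfl, hN N le_rfl b le_rfl]
        rcases le_total k b with hk | hk
        · rw [hN N le_rfl k hk]
        · rw [hemp _ _ hk, ← hemp (i + N) b le_rfl, hN N le_rfl b le_rfl]
    · rintro _ ⟨n, rfl⟩
      exact hsup n i
  rw [hg i, bdStp, heq, bdCan, bdD_succ F i, bdCnt_insert]

end BDAbstract
section BDAut

variable {Q A : Type*}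

def bdSat : TCond Q A → A → Set Q → Prop
  | .atom B, a, _ => a ∈ B
  | .next q, _, X => q ∈ X
  | .or τ₀ τ₁, a, X => bdSat τ₀ a X ∨ bdSat τ₁ a X
  | .and τ₀ τ₁, a, X => bdSat τ₀ a X ∧ bdSat τ₁ a X

theorem bdSat_mono' (τ : TCond Q A) (a : A) {X Y : Set Q}
    (h : ∀ q, τ.NextOccurs q → q ∈ X → q ∈ Y) (hs : bdSat τ a X) : bdSat τ a Y := by
  induction τ with
  | atom B => exact hs
  | next q => exact h q rfl hs
  | or τ₀ τ₁ h₀ h₁ =>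
    exact hs.imp (h₀ fun q hq => h q (Or.inl hq)) (h₁ fun q hq => h q (Or.inr hq))
  | and τ₀ τ₁ h₀ h₁ =>
    exact hs.imp (h₀ fun q hq => h q (Or.inl hq)) (h₁ fun q hq => h q (Or.inr hq))

theorem bdSat_mono (τ : TCond Q A) (a : A) {X Y : Set Q}
    (h : X ⊆ Y) (hs : bdSat τ a X) : bdSat τ a Y := bdSat_mono' τ a (fun _ _ hq => h hq) hs

theorem bdSat_congr (τ : TCond Q A) (a : A) {X Y : Set Q}
    (h : ∀ q, τ.NextOccurs q → (q ∈ X ↔ q ∈ Y)) : bdSat τ a X ↔ bdSat τ a Y :=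
  ⟨bdSat_mono' τ a fun q hq => (h q hq).1, bdSat_mono' τ a fun q hq => (h q hq).2⟩

/-! rank lemma -/

section Rank
variable {O : Type} [LinearOrder O] [WellFoundedLT O] [OrderBot O]

open Classical in
noncomputable def bdFrk (rk : Q → WithTop O) (a : A) : TCond Q A → WithTop O
  | .atom B => if a ∈ B then ⊥ else ⊤
  | .next q => rk q
  | .or τ₀ τ₁ => min (bdFrk rk a τ₀) (bdFrk rk a τ₁)
  | .and τ₀ τ₁ => max (bdFrk rk a τ₀) (bdFrk rk a τ₁)

omit [WellFoundedLT O] in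
theorem bdFrk_le (rk : Q → WithTop O) (a : A) (o : WithTop O) (τ : TCond Q A)
    (h : bdSat τ a {p | rk p ≤ o}) : bdFrk rk a τ ≤ o := by
  induction τ with
  | atom B =>
    have h' : a ∈ B := h
    simp [bdFrk, h']
  | next q => exact h
  | or τ₀ τ₁ h₀ h₁ => exact min_le_iff.2 (h.imp h₀ h₁)
  | and τ₀ τ₁ h₀ h₁ => exact max_le_iff.2 (h.imp h₀ h₁)

omit [WellFoundedLT O] in
theorem bdFrk_lt (rk : Q → WithTop O) (a : A) (o : WithTop O) (ho : ⊥ < o) (τ : TCond Q A)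
    (h : bdSat τ a {p | rk p < o}) : bdFrk rk a τ < o := by
  induction τ with
  | atom B =>
    have h' : a ∈ B := h
    simpa [bdFrk, h'] using ho
  | next q => exact h
  | or τ₀ τ₁ h₀ h₁ => exact min_lt_iff.2 (h.imp h₀ h₁)
  | and τ₀ τ₁ h₀ h₁ => exact max_lt_iff.2 (h.imp h₀ h₁)

noncomputable def bdMu (_M : WAA Q A) (u : ℕ → A) (rk : ℕ → Q → WithTop O) :
    WAA.Vert Q A → WithTop O
  | (i, Sum.inl q) => rk i q
  | (i, Sum.inr τ) => bdFrk (rk (i + 1)) (u i) τ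

def bdArc (M : WAA Q A) : WAA.Vert Q A → WAA.Vert Q A → Prop
  | (i, Sum.inl q), w => w = (i, Sum.inr (M.δ q))
  | (_, Sum.inr (.atom _)), _ => False
  | (i, Sum.inr (.next q)), w => w = (i + 1, Sum.inl q)
  | (i, Sum.inr (.or τ₀ τ₁)), w => w = (i, Sum.inr τ₀) ∨ w = (i, Sum.inr τ₁)
  | (i, Sum.inr (.and τ₀ τ₁)), w => w = (i, Sum.inr τ₀) ∨ w = (i, Sum.inr τ₁)

def bdSubfOk (M : WAA Q A) : WAA.Vert Q A → Prop
  | (_, Sum.inl _) => True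
  | (_, Sum.inr τ) => ∃ q, TCond.Subf τ (M.δ q)

theorem bdSubf_trans {χ τ σ : TCond Q A} (h : TCond.Subf χ τ) (h' : TCond.Subf τ σ) :
    TCond.Subf χ σ := by
  induction h' with
  | refl => exact h
  | orL _ ih => exact .orL ih
  | orR _ ih => exact .orR ih
  | andL _ ih => exact .andL ih
  | andR _ ih => exact .andR ih

theorem bdArc_subf (M : WAA Q A) {v w : WAA.Vert Q A} (h : bdArc M v w) (hv : bdSubfOk M v) :
    bdSubfOk M w := by
  rcases v with ⟨i, q | τ⟩
  · obtain rfl : w = _ := h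
    exact ⟨q, .refl _⟩
  · obtain ⟨q, hq⟩ := hv
    cases τ with
    | atom B => exact h.elim
    | next p => obtain rfl : w = _ := h; trivial
    | or τ₀ τ₁ =>
      rcases h with rfl | rfl
      · exact ⟨q, bdSubf_trans (.orL (.refl _)) hq⟩
      · exact ⟨q, bdSubf_trans (.orR (.refl _)) hq⟩
    | and τ₀ τ₁ =>
      rcases h with rfl | rfl
      · exact ⟨q, bdSubf_trans (.andL (.refl _)) hq⟩
      · exact ⟨q, bdSubf_trans (.andR (.refl _)) hq⟩

theorem bdRank (M : WAA Q A) (u : ℕ → A) (rk : ℕ → Q → WithTop O)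
    (h1 : ∀ i q, rk i q ≠ ⊤ → bdSat (M.δ q) (u i) {p | rk (i + 1) p ≤ rk i q})
    (h2 : ∀ i q, rk i q ≠ ⊤ → q ∉ M.recurring →
      ⊥ < rk i q ∧ bdSat (M.δ q) (u i) {p | rk (i + 1) p < rk i q})
    (i : ℕ) (q : Q) (hq : rk i q ≠ ⊤) : M.AcceptsFrom u i q := by
  let V : Set (WAA.Vert Q A) := {v | bdMu M u rk v ≠ ⊤ ∧ bdSubfOk M v}
  let E : WAA.Vert Q A → WAA.Vert Q A → Prop := fun v w =>
    v ∈ V ∧ bdArc M v w ∧ bdMu M u rk w ≤ bdMu M u rk v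
  let G : M.RunGraph u :=
    { V := V
      E := E
      edge_mem := fun v w h => ⟨h.1, ne_top_of_le_ne_top h.1.1 h.2.2, bdArc_subf M h.2.1 h.1.2⟩
      cond_subf := fun i τ h => h.2
      state_succ := by
        intro i q hv w
        refine ⟨fun h => h.2.1, ?_⟩
        rintro rfl
        exact ⟨hv, rfl, bdFrk_le _ _ _ _ (h1 i q hv.1)⟩
      next_succ := by
        intro i q hv w
        refine ⟨fun h => h.2.1, ?_⟩
        rintro rfl
        exact ⟨hv, rfl, le_rfl⟩
      or_succ_subset := fun i τ₀ τ₁ hv w h => h.2.1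
      or_succ_exists := by
        intro i τ₀ τ₁ hv
        rcases le_total (bdFrk (rk (i + 1)) (u i) τ₀) (bdFrk (rk (i + 1)) (u i) τ₁) with h | h
        · exact ⟨(i, Sum.inr τ₀), hv, Or.inl rfl, le_min le_rfl h⟩
        · exact ⟨(i, Sum.inr τ₁), hv, Or.inr rfl, le_min h le_rfl⟩
      and_succ := by
        intro i τ₀ τ₁ hv w
        refine ⟨fun h => h.2.1, ?_⟩
        rintro (rfl | rfl)
        · exact ⟨hv, Or.inl rfl, le_max_left _ _⟩
        · exact ⟨hv, Or.inr rfl, le_max_right _ _⟩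
      atom_succ := fun i B w h => h.2.1
      atom_ok := by
        intro i B hv
        by_contra hn
        apply hv.1
        simp [bdMu, bdFrk, hn] }
  refine ⟨G, ?_, hq, trivial⟩
  intro p hp q hinf
  by_contra hqn
  have hanti : Antitone (fun n => bdMu M u rk (p n)) :=
    antitone_nat_of_succ_le fun n => (hp n).2.2
  obtain ⟨N, hN⟩ := WellFoundedLT.antitone_chain_condition hanti
  obtain ⟨n, hn, hpn⟩ := hinf N
  have e : bdMu M u rk (p N) = bdMu M u rk (p n) := hN n hn
  have e' : bdMu M u rk (p N) = bdMu M u rk (p (n + 1)) := hN (n + 1) (by omega)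
  rw [e] at e'
  obtain ⟨⟨hV, -⟩, harc, -⟩ := hp n
  rcases hpe : p n with ⟨j, x⟩
  rw [hpe] at hpn
  obtain rfl : x = Sum.inl q := hpn
  rw [hpe] at e' hV harc
  have harc' : p (n + 1) = _ := harc
  rw [harc'] at e'
  obtain ⟨hb, hs⟩ := h2 j q hV hqn
  exact absurd e'.symm (bdFrk_lt _ _ _ hb _ hs).ne

end Rank

/-! class step function -/

def bdMix (M : WAA Q A) (q₀ : Q) (L X : Set Q) : Set Q :=
  {p | (M.Conn q₀ p ∧ (p ∈ X ↔ q₀ ∉ M.recurring)) ∨ (¬ M.Conn q₀ p ∧ p ∈ L)}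

def bdF (M : WAA Q A) (q₀ : Q) (a : A) (L X : Set Q) : Set Q :=
  {q | M.Conn q₀ q ∧ (bdSat (M.δ q) a (bdMix M q₀ L X) ↔ q₀ ∉ M.recurring)}

theorem bdConn_refl (M : WAA Q A) (q : Q) : M.Conn q q := ⟨.refl, .refl⟩
theorem bdConn_symm {M : WAA Q A} {p q : Q} (h : M.Conn p q) : M.Conn q p := ⟨h.2, h.1⟩
theorem bdConn_trans {M : WAA Q A} {p q r : Q} (h : M.Conn p q) (h' : M.Conn q r) :
    M.Conn p r := ⟨h.1.trans h'.1, h'.2.trans h.2⟩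
theorem bdConn_iff {M : WAA Q A} {p q : Q} (h : M.Conn p q) (r : Q) :
    M.Conn p r ↔ M.Conn q r :=
  ⟨fun h' => bdConn_trans (bdConn_symm h) h', fun h' => bdConn_trans h h'⟩
theorem bdConn_rec {M : WAA Q A} {p q : Q} (h : M.Conn p q) :
    p ∈ M.recurring ↔ q ∈ M.recurring := M.weak p q h.1 h.2

theorem bdF_mono (M : WAA Q A) (q₀ : Q) (a : A) (L : Set Q) : Monotone (bdF M q₀ a L) := by
  intro X Y hXY q hq
  refine ⟨hq.1, ?_⟩
  have h2 := hq.2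
  by_cases hr : q₀ ∈ M.recurring
  · simp only [hr, not_true_eq_false, iff_false] at h2 ⊢
    refine fun h => h2 (bdSat_mono _ _ ?_ h)
    rintro p (⟨h, h'⟩ | h)
    · left
      simp only [hr, not_true_eq_false, iff_false] at h' ⊢
      exact ⟨h, fun hx => h' (hXY hx)⟩
    · exact Or.inr h
  · simp only [hr, not_false_eq_true, iff_true] at h2 ⊢
    refine bdSat_mono _ _ ?_ h2
    rintro p (⟨h, h'⟩ | h)
    · left
      simp only [hr, not_false_eq_true, iff_true] at h' ⊢
      exact ⟨h, hXY h'⟩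
    · exact Or.inr h

theorem bdMix_conn {M : WAA Q A} {p q : Q} (h : M.Conn p q) (L X : Set Q) :
    bdMix M p L X = bdMix M q L X := by
  ext r
  simp only [bdMix, Set.mem_ofPred_eq, bdConn_iff h r, bdConn_rec h]

theorem bdF_conn {M : WAA Q A} {p q : Q} (h : M.Conn p q) : bdF M p = bdF M q := by
  funext a L X
  ext r
  simp only [bdF, Set.mem_ofPred_eq, bdMix_conn h, bdConn_iff h r, bdConn_rec h]

theorem bdF_congr (M : WAA Q A) (q₀ : Q) (a : A) {L L' : Set Q}
    (h : ∀ p, Relation.ReflTransGen M.Edge q₀ p → ¬ M.Conn q₀ p → (p ∈ L ↔ p ∈ L')) :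
    bdF M q₀ a L = bdF M q₀ a L' := by
  funext X
  ext q
  simp only [bdF, Set.mem_ofPred_eq]
  refine and_congr_right fun hq => iff_congr ?_ Iff.rfl
  refine bdSat_congr _ _ fun p hp => ?_
  simp only [bdMix, Set.mem_ofPred_eq]
  refine or_congr Iff.rfl (and_congr_right fun hn => h p ?_ hn)
  exact hq.1.tail hp

def bdAcc (M : WAA Q A) (u : ℕ → A) (i : ℕ) : Set Q := {q | M.AcceptsFrom u i q}

/-- the step functions for the class of `q₀` along the word `u` -/
def bdFu (M : WAA Q A) (u : ℕ → A) (q₀ : Q) (i : ℕ) : Set Q → Set Q :=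
  bdF M q₀ (u i) (bdAcc M u (i + 1))

theorem bdFu_mono (M : WAA Q A) (u : ℕ → A) (q₀ : Q) (i : ℕ) : Monotone (bdFu M u q₀ i) :=
  bdF_mono _ _ _ _

def bdW (M : WAA Q A) (u : ℕ → A) (q₀ : Q) (i : ℕ) : Set Q :=
  {q | ∃ n, q ∈ bdPhi (bdFu M u q₀) i n ∅}

theorem bdW_fix [Finite Q] (M : WAA Q A) (u : ℕ → A) (q₀ : Q) (i : ℕ) :
    bdFu M u q₀ i (bdW M u q₀ (i + 1)) ⊆ bdW M u q₀ i := by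
  obtain ⟨N, hN⟩ := bdStab (bdFu M u q₀) (bdFu_mono M u q₀) (i + 1)
  intro q hq
  refine ⟨N + 1, ?_⟩
  refine bdFu_mono M u q₀ i ?_ hq
  rintro p ⟨n, hn⟩
  exact hN n hn

theorem bdW_sub (M : WAA Q A) (u : ℕ → A) (q₀ : Q) (i : ℕ) {q : Q}
    (h : q ∈ bdW M u q₀ i) : M.Conn q₀ q := by
  obtain ⟨n, hn⟩ := h
  rcases n with _ | n
  · exact absurd hn (Set.notMem_empty _)
  · exact hn.1

theorem bdW_conn {M : WAA Q A} (u : ℕ → A) {p q : Q} (h : M.Conn p q) (i : ℕ) :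
    bdW M u p i = bdW M u q i := by
  have : bdFu M u p = bdFu M u q := by
    funext i; simp only [bdFu, bdF_conn h]
  simp only [bdW, this]

/-! soundness of run graphs -/

theorem bdGraph_sat {M : WAA Q A} {u : ℕ → A} (G : M.RunGraph u) (i : ℕ) (τ : TCond Q A)
    (h : (i, Sum.inr τ) ∈ G.V) : bdSat τ (u i) {q | (i + 1, Sum.inl q) ∈ G.V} := by
  induction τ with
  | atom B => exact G.atom_ok i B h
  | next q => exact (G.edge_mem ((G.next_succ i q h _).2 rfl)).2
  | or τ₀ τ₁ h₀ h₁ =>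
    obtain ⟨w, hw⟩ := G.or_succ_exists i τ₀ τ₁ h
    have hm := (G.edge_mem hw).2
    rcases G.or_succ_subset i τ₀ τ₁ h w hw with rfl | rfl
    · exact Or.inl (h₀ hm)
    · exact Or.inr (h₁ hm)
  | and τ₀ τ₁ h₀ h₁ =>
    exact ⟨h₀ (G.edge_mem ((G.and_succ i τ₀ τ₁ h _).2 (Or.inl rfl))).2,
      h₁ (G.edge_mem ((G.and_succ i τ₀ τ₁ h _).2 (Or.inr rfl))).2⟩

theorem bdAcc_step {M : WAA Q A} {u : ℕ → A} {i : ℕ} {q : Q} (h : q ∈ bdAcc M u i) :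
    bdSat (M.δ q) (u i) (bdAcc M u (i + 1)) := by
  obtain ⟨G, hG, hq⟩ := h
  have := bdGraph_sat G i (M.δ q) (G.edge_mem ((G.state_succ i q hq _).2 rfl)).2
  exact bdSat_mono _ _ (fun p hp => ⟨G, hG, hp⟩) this

theorem bdPath_state {M : WAA Q A} {u : ℕ → A} (G : M.RunGraph u) (p : ℕ → WAA.Vert Q A)
    (hp : ∀ n, G.E (p n) (p (n + 1))) (m : ℕ) : ∃ n, m ≤ n ∧ ∃ q, (p n).2 = Sum.inl q := by
  have key : ∀ τ : TCond Q A, ∀ m, (p m).2 = Sum.inr τ →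
      ∃ n, m ≤ n ∧ ∃ q, (p n).2 = Sum.inl q := by
    intro τ
    induction τ with
    | atom B =>
      intro m hm
      have h := hp m
      rcases hpe : p m with ⟨i, x⟩
      rw [hpe] at hm h
      obtain rfl : x = _ := hm
      exact (G.atom_succ _ _ _ h).elim
    | next q =>
      intro m hm
      have h := hp m
      rcases hpe : p m with ⟨i, x⟩
      rw [hpe] at hm h
      obtain rfl : x = _ := hm
      have := (G.next_succ i q (G.edge_mem h).1 _).1 h
      exact ⟨m + 1, by omega, q, by rw [this]⟩
    | or τ₀ τ₁ h₀ h₁ =>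
      intro m hm
      have h := hp m
      rcases hpe : p m with ⟨i, x⟩
      rw [hpe] at hm h
      obtain rfl : x = _ := hm
      rcases G.or_succ_subset i _ _ (G.edge_mem h).1 _ h with h' | h'
      · obtain ⟨n, hn, hq⟩ := h₀ (m + 1) (by rw [h'])
        exact ⟨n, by omega, hq⟩
      · obtain ⟨n, hn, hq⟩ := h₁ (m + 1) (by rw [h'])
        exact ⟨n, by omega, hq⟩
    | and τ₀ τ₁ h₀ h₁ =>
      intro m hm
      have h := hp m
      rcases hpe : p m with ⟨i, x⟩
      rw [hpe] at hm h
      obtain rfl : x = _ := hm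
      rcases (G.and_succ i _ _ (G.edge_mem h).1 _).1 h with h' | h'
      · obtain ⟨n, hn, hq⟩ := h₀ (m + 1) (by rw [h'])
        exact ⟨n, by omega, hq⟩
      · obtain ⟨n, hn, hq⟩ := h₁ (m + 1) (by rw [h'])
        exact ⟨n, by omega, hq⟩
  rcases hx : (p m).2 with q | τ
  · exact ⟨m, le_rfl, q, hx⟩
  · exact key τ m hx

theorem bdPath_inf [Finite Q] {M : WAA Q A} {u : ℕ → A} (G : M.RunGraph u)
    (p : ℕ → WAA.Vert Q A) (hp : ∀ n, G.E (p n) (p (n + 1))) :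
    ∃ q, ∀ m, ∃ n, m ≤ n ∧ (p n).2 = Sum.inl q := by
  by_contra hcon
  push Not at hcon
  choose f hf using hcon
  obtain ⟨N, hN⟩ := (Set.finite_range f).bddAbove
  obtain ⟨n, hn, q, hq⟩ := bdPath_state G p hp N
  exact hf q n (le_trans (hN ⟨q, rfl⟩) hn) hq

def bdBad (M : WAA Q A) (u : ℕ → A) (q₀ : Q) : WAA.Vert Q A → Prop
  | (i, Sum.inl q) => M.Conn q₀ q ∧ q ∉ bdW M u q₀ i
  | (i, Sum.inr τ) => ¬ bdSat τ (u i) (bdMix M q₀ (bdAcc M u (i + 1)) (bdW M u q₀ (i + 1)))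

theorem bdBad_succ [Finite Q] {M : WAA Q A} {u : ℕ → A} {q₀ : Q} (hr : q₀ ∉ M.recurring)
    (G : M.RunGraph u) (hG : G.Final) (v : WAA.Vert Q A) (hv : v ∈ G.V)
    (hb : bdBad M u q₀ v) : ∃ w, G.E v w ∧ bdBad M u q₀ w := by
  rcases v with ⟨i, q | τ⟩
  · refine ⟨_, (G.state_succ i q hv _).2 rfl, ?_⟩
    intro hs
    apply hb.2
    apply bdW_fix
    exact ⟨hb.1, by simpa [hr] using hs⟩
  · cases τ with
    | atom B => exact (hb (G.atom_ok i B hv)).elim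
    | next p =>
      have he := (G.next_succ i p hv _).2 rfl
      refine ⟨_, he, ?_⟩
      have hacc : p ∈ bdAcc M u (i + 1) := ⟨G, hG, (G.edge_mem he).2⟩
      have hb' : ¬ (p ∈ bdMix M q₀ (bdAcc M u (i + 1)) (bdW M u q₀ (i + 1))) := hb
      have hc : M.Conn q₀ p := by
        by_contra hc
        exact hb' (Or.inr ⟨hc, hacc⟩)
      exact ⟨hc, fun hw => hb' (Or.inl ⟨hc, by simpa [hr] using hw⟩)⟩
    | or τ₀ τ₁ =>
      obtain ⟨w, hw⟩ := G.or_succ_exists i τ₀ τ₁ hv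
      refine ⟨w, hw, ?_⟩
      rcases G.or_succ_subset i τ₀ τ₁ hv w hw with rfl | rfl
      · exact fun h => hb (Or.inl h)
      · exact fun h => hb (Or.inr h)
    | and τ₀ τ₁ =>
      by_cases h : bdBad M u q₀ (i, Sum.inr τ₀)
      · exact ⟨_, (G.and_succ i τ₀ τ₁ hv _).2 (Or.inl rfl), h⟩
      · refine ⟨_, (G.and_succ i τ₀ τ₁ hv _).2 (Or.inr rfl), fun h' => hb ⟨?_, h'⟩⟩
        exact not_not.1 h

theorem bdAcc_nonrec [Finite Q] {M : WAA Q A} {u : ℕ → A} {i : ℕ} {q : Q}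
    (hr : q ∉ M.recurring) (h : q ∈ bdAcc M u i) : q ∈ bdW M u q i := by
  by_contra hn
  obtain ⟨G, hG, hq⟩ := h
  have hstep : ∀ v : {v // v ∈ G.V ∧ bdBad M u q v}, ∃ w : {v // v ∈ G.V ∧ bdBad M u q v},
      G.E v.1 w.1 := by
    rintro ⟨v, hv, hb⟩
    obtain ⟨w, hw, hb'⟩ := bdBad_succ hr G hG v hv hb
    exact ⟨⟨w, (G.edge_mem hw).2, hb'⟩, hw⟩
  choose f hf using hstep
  let p : ℕ → {v // v ∈ G.V ∧ bdBad M u q v} := fun n =>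
    f^[n] ⟨(i, Sum.inl q), hq, bdConn_refl M q, hn⟩
  have hp : ∀ n, G.E (p n).1 (p (n + 1)).1 := by
    intro n
    simp only [p, Function.iterate_succ_apply']
    exact hf _
  obtain ⟨q', hinf⟩ := bdPath_inf G (fun n => (p n).1) hp
  have hrec := hG _ hp q' hinf
  obtain ⟨n, -, hpn⟩ := hinf 0
  have hb := (p n).2.2
  rcases hpe : (p n).1 with ⟨j, x⟩
  rw [hpe] at hb
  simp only [hpe] at hpn
  subst hpn
  exact hr ((bdConn_rec hb.1).2 hrec)

theorem bdAcc_rec {M : WAA Q A} {u : ℕ → A} {q₀ : Q} (hr : q₀ ∈ M.recurring) (n : ℕ) :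
    ∀ i q, q ∈ bdPhi (bdFu M u q₀) i n ∅ → q ∉ bdAcc M u i := by
  induction n with
  | zero => intro i q h; exact absurd h (Set.notMem_empty _)
  | succ n ih =>
    rintro i q ⟨hc, hs⟩ hacc
    simp only [hr, not_true_eq_false, iff_false] at hs
    apply hs
    refine bdSat_mono _ _ ?_ (bdAcc_step hacc)
    intro p hp
    by_cases hcp : M.Conn q₀ p
    · left
      refine ⟨hcp, ?_⟩
      simp only [hr, not_true_eq_false, iff_false]
      exact fun h => ih _ _ h hp
    · exact Or.inr ⟨hcp, hp⟩

noncomputable def bdLev (M : WAA Q A) (q : Q) : ℕ :=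
  Set.ncard {p | Relation.ReflTransGen M.Edge q p}

theorem bdLev_le [Finite Q] {M : WAA Q A} {p q : Q} (h : Relation.ReflTransGen M.Edge q p) :
    bdLev M p ≤ bdLev M q :=
  Set.ncard_le_ncard (fun _ hr => h.trans hr) (Set.toFinite _)

theorem bdLev_conn [Finite Q] {M : WAA Q A} {p q : Q} (h : Relation.ReflTransGen M.Edge q p)
    (hn : ¬ M.Conn q p) : bdLev M p < bdLev M q := by
  refine Set.ncard_lt_ncard ⟨fun _ hr => h.trans hr, fun h' => hn ⟨h, ?_⟩⟩ (Set.toFinite _)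
  exact h' (show q ∈ {p | Relation.ReflTransGen M.Edge q p} from .refl)

def bdZ (M : WAA Q A) (u : ℕ → A) (i : ℕ) : Set Q :=
  {q | q ∈ bdW M u q i ↔ q ∉ M.recurring}

theorem bdAcc_sub_Z [Finite Q] (M : WAA Q A) (u : ℕ → A) (i : ℕ) :
    bdAcc M u i ⊆ bdZ M u i := by
  intro q hq
  by_cases hr : q ∈ M.recurring
  · have : q ∉ bdW M u q i := by
      rintro ⟨n, hn⟩
      exact bdAcc_rec hr n i q hn hq
    simp [bdZ, this, hr]
  · simp [bdZ, hr, bdAcc_nonrec hr hq]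

open Classical in
noncomputable def bdRk (M : WAA Q A) (u : ℕ → A) (i : ℕ) (q : Q) : WithTop (ℕ ×ₗ ℕ) :=
  if q ∈ bdZ M u i then
    ((toLex (bdLev M q, if q ∈ M.recurring then 0
      else sInf {n | q ∈ bdPhi (bdFu M u q) i n ∅}) : ℕ ×ₗ ℕ) : WithTop (ℕ ×ₗ ℕ))
  else ⊤

theorem bdZ_eq [Finite Q] (M : WAA Q A) (u : ℕ → A) (i : ℕ) :
    bdZ M u i = bdAcc M u i := by
  refine Set.Subset.antisymm ?_ (bdAcc_sub_Z M u i)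
  have hZ : ∀ {i q}, bdRk M u i q ≠ ⊤ → q ∈ bdZ M u i := by
    intro i q h
    by_contra hn
    exact h (by simp [bdRk, hn])
  have hnr : ∀ i q, bdRk M u i q ≠ ⊤ → q ∉ M.recurring →
      ⊥ < bdRk M u i q ∧ bdSat (M.δ q) (u i) {p | bdRk M u (i + 1) p < bdRk M u i q} := by
    intro i q h hr
    have hqZ := hZ h
    have hW : q ∈ bdW M u q i := by simpa [bdZ, hr] using hqZ
    have hne : {n | q ∈ bdPhi (bdFu M u q) i n ∅}.Nonempty := hW
    have hmem := Nat.sInf_mem hne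
    set n := sInf {n | q ∈ bdPhi (bdFu M u q) i n ∅} with hn
    have hrk : bdRk M u i q = ((toLex (bdLev M q, n) : ℕ ×ₗ ℕ) : WithTop (ℕ ×ₗ ℕ)) := by
      simp [bdRk, hqZ, hr, hn]
    obtain ⟨n', hn'⟩ : ∃ n', n = n' + 1 := by
      rcases n with _ | n'
      · exact absurd (show q ∈ (∅ : Set Q) from hmem) (Set.notMem_empty q)
      · exact ⟨n', rfl⟩
    rw [hn'] at hmem hrk
    obtain ⟨-, hs⟩ := hmem
    have hs' := hs.2 hr
    have hlt : bdSat (M.δ q) (u i) {p | bdRk M u (i + 1) p < bdRk M u i q} := by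
      refine bdSat_mono' _ _ ?_ hs'
      intro p hp hmix
      have hreach : Relation.ReflTransGen M.Edge q p := .single hp
      show bdRk M u (i + 1) p < bdRk M u i q
      rcases hmix with ⟨hc, hm⟩ | ⟨hc, hm⟩
      · have hm' : p ∈ bdPhi (bdFu M u q) (i + 1) n' ∅ := hm.2 hr
        have hpr : p ∉ M.recurring := fun h => hr ((bdConn_rec hc).2 h)
        have hfe : bdFu M u p = bdFu M u q := by
          funext i; simp only [bdFu, bdF_conn hc]
        have hpZ : p ∈ bdZ M u (i + 1) := by
          have : p ∈ bdW M u p (i + 1) := ⟨n', by rw [hfe]; exact hm'⟩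
          simp [bdZ, this, hpr]
        have hle : sInf {n | p ∈ bdPhi (bdFu M u p) (i + 1) n ∅} ≤ n' :=
          Nat.sInf_le (by rw [hfe]; exact hm')
        rw [hrk]
        simp only [bdRk, hpZ, hpr, if_true, if_false]
        rw [WithTop.coe_lt_coe, Prod.Lex.toLex_lt_toLex]
        have h1 := bdLev_le hreach
        rcases h1.lt_or_eq with h1 | h1
        · exact Or.inl h1
        · exact Or.inr ⟨h1, by dsimp only; omega⟩
      · have hpZ := bdAcc_sub_Z M u (i + 1) hm
        rw [hrk]
        simp only [bdRk, hpZ, if_true]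
        rw [WithTop.coe_lt_coe, Prod.Lex.toLex_lt_toLex]
        exact Or.inl (bdLev_conn hreach hc)
    refine ⟨?_, hlt⟩
    refine lt_of_le_of_lt (bot_le (a := ((toLex (bdLev M q, 0) : ℕ ×ₗ ℕ) : WithTop (ℕ ×ₗ ℕ)))) ?_
    rw [hrk, WithTop.coe_lt_coe, Prod.Lex.toLex_lt_toLex]
    exact Or.inr ⟨rfl, Nat.succ_pos _⟩
  intro q hq
  refine bdRank M u (bdRk M u) ?_ hnr i q (by simp [bdRk, hq])
  intro i q h
  by_cases hr : q ∈ M.recurring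
  · have hqZ := hZ h
    have hW : q ∉ bdW M u q i := by simpa [bdZ, hr] using hqZ
    have hs : bdSat (M.δ q) (u i) (bdMix M q (bdAcc M u (i + 1)) (bdW M u q (i + 1))) := by
      by_contra hs
      exact hW (bdW_fix M u q i ⟨bdConn_refl M q, by simpa [hr] using hs⟩)
    have hrk : bdRk M u i q = ((toLex (bdLev M q, 0) : ℕ ×ₗ ℕ) : WithTop (ℕ ×ₗ ℕ)) := by
      simp [bdRk, hqZ, hr]
    refine bdSat_mono' _ _ ?_ hs
    intro p hp hmix
    have hreach : Relation.ReflTransGen M.Edge q p := .single hp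
    show bdRk M u (i + 1) p ≤ bdRk M u i q
    rcases hmix with ⟨hc, hm⟩ | ⟨hc, hm⟩
    · have hm' : p ∉ bdW M u q (i + 1) := by simpa [hr] using hm
      have hpr : p ∈ M.recurring := (bdConn_rec hc).1 hr
      have hpZ : p ∈ bdZ M u (i + 1) := by
        rw [bdW_conn u hc] at hm'
        simp [bdZ, hm', hpr]
      rw [hrk]
      simp only [bdRk, hpZ, hpr, if_true]
      rw [WithTop.coe_le_coe, Prod.Lex.toLex_le_toLex]
      rcases (bdLev_le hreach).lt_or_eq with h1 | h1
      · exact Or.inl h1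
      · exact Or.inr ⟨h1, le_rfl⟩
    · have hpZ := bdAcc_sub_Z M u (i + 1) hm
      rw [hrk]
      simp only [bdRk, hpZ, if_true]
      rw [WithTop.coe_le_coe, Prod.Lex.toLex_le_toLex]
      exact Or.inl (bdLev_conn hreach hc)
  · exact bdSat_mono' _ _ (fun p _ hp => le_of_lt (show bdRk M u (i + 1) p < bdRk M u i q from hp)) (hnr i q h hr).2

/-! the automaton -/

noncomputable def bdSz (M : WAA Q A) (q : Q) : ℕ := Set.ncard {p | M.Conn q p}

abbrev BDP (M : WAA Q A) := (q : Q) → Fin (bdSz M q + 1)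

def bdLam (M : WAA Q A) (g : BDP M) : Set Q := {q | 0 < (g q : ℕ) ↔ q ∉ M.recurring}

open Classical in
noncomputable def bdRes (M : WAA Q A) (q₀ : Q) (g : BDP M) (p : Q) : ℕ :=
  if M.Conn q₀ p then (g p : ℕ) else 0

theorem bdRes_conn {M : WAA Q A} {p q : Q} (h : M.Conn p q) : bdRes M p = bdRes M q := by
  funext g r
  by_cases hc : M.Conn q r
  · simp [bdRes, hc, (bdConn_iff h r).2 hc]
  · simp [bdRes, hc, mt (bdConn_iff h r).1 hc]

theorem bdStp_le [Finite Q] (M : WAA Q A) (q : Q) (a : A) (L : Set Q) (g : Q → ℕ) :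
    bdStp (bdF M q a L) g q < bdSz M q + 1 := by
  refine Nat.lt_succ_of_le (bdL3 (bdCh_chain _ (bdF_mono M q a L) g) ?_ q)
  rintro _ ⟨X, -, rfl⟩ p hp
  exact hp.1

noncomputable def bdRho [Finite Q] (M : WAA Q A) (a : A) (g : BDP M) : BDP M := fun q =>
  ⟨bdStp (bdF M q a (bdLam M g)) (bdRes M q g) q, bdStp_le M q a _ _⟩

def bdT (M : WAA Q A) (q : Q) : Set (BDP M × A × BDP M) :=
  {t | bdF M q t.2.1 (bdLam M t.2.2) (bdLvl (bdRes M q t.2.2) 0) =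
    bdF M q t.2.1 (bdLam M t.2.2) (bdLvl (bdRes M q t.2.2) 1)}

theorem bdCan_le [Finite Q] (M : WAA Q A) (u : ℕ → A) (i : ℕ) (q : Q) :
    bdCan (bdFu M u q) i q < bdSz M q + 1 := by
  rw [bdCan_step _ (bdFu_mono M u q)]
  exact bdStp_le _ _ _ _ _

noncomputable def bdRun [Finite Q] (M : WAA Q A) (u : ℕ → A) (i : ℕ) : BDP M := fun q =>
  ⟨bdCan (bdFu M u q) i q, bdCan_le M u i q⟩

theorem bdLam_eq [Finite Q] (M : WAA Q A) (u : ℕ → A) (i : ℕ) (g : BDP M) (q : Q)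
    (h : (g q : ℕ) = bdCan (bdFu M u q) i q) : q ∈ bdLam M g ↔ q ∈ bdAcc M u i := by
  rw [← bdZ_eq]
  simp only [bdLam, bdZ, bdW, Set.mem_ofPred_eq, h, bdCan_pos]

theorem bdLam_run [Finite Q] (M : WAA Q A) (u : ℕ → A) (i : ℕ) :
    bdLam M (bdRun M u i) = bdAcc M u i := by
  ext q
  exact bdLam_eq M u i _ q rfl

theorem bdStp_off (M : WAA Q A) (q : Q) (a : A) (L : Set Q) (g : Q → ℕ) (p : Q)
    (h : ¬ M.Conn q p) : bdStp (bdF M q a L) g p = 0 := by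
  have : {Y | Y ∈ bdF M q a L '' bdCh g ∧ p ∈ Y} = ∅ := by
    apply Set.eq_empty_of_forall_notMem
    rintro _ ⟨⟨X, -, rfl⟩, hp⟩
    exact h hp.1
  rw [bdStp, bdCnt, this, Set.ncard_empty]

theorem bdRes_run [Finite Q] (M : WAA Q A) (u : ℕ → A) (i : ℕ) (q : Q) :
    bdRes M q (bdRun M u i) = bdCan (bdFu M u q) i := by
  funext p
  by_cases h : M.Conn q p
  · have hfe : bdFu M u p = bdFu M u q := by
      funext i; simp only [bdFu, bdF_conn h]
    simp only [bdRes, h, if_true, bdRun, hfe]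
  · simp only [bdRes, h, if_false]
    rw [bdCan_step _ (bdFu_mono M u q)]
    exact (bdStp_off M q _ _ _ p h).symm

theorem bdRun_back [Finite Q] (M : WAA Q A) (u : ℕ → A) : IsBackRun (bdRho M) u (bdRun M u) := by
  intro i
  funext q
  apply Fin.ext
  simp only [bdRho, bdRes_run, bdLam_run]
  show bdCan _ _ _ = _
  rw [bdCan_step _ (bdFu_mono M u q)]
  rfl

theorem bdRun_T [Finite Q] (M : WAA Q A) (u : ℕ → A) (q : Q) (m : ℕ) :
    ∃ i, m ≤ i ∧ (bdRun M u i, u i, bdRun M u (i + 1)) ∈ bdT M q := by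
  obtain ⟨i, hi, h⟩ := bdCan_T (bdFu M u q) (bdFu_mono M u q) m
  refine ⟨i, hi, ?_⟩
  simp only [bdT, Set.mem_ofPred_eq, bdRes_run, bdLam_run]
  exact h

theorem bdRun_uniq [Finite Q] (M : WAA Q A) (u : ℕ → A) (r : ℕ → BDP M)
    (hr : IsBackRun (bdRho M) u r)
    (hT : ∀ q m, ∃ i, m ≤ i ∧ (r i, u i, r (i + 1)) ∈ bdT M q) : r = bdRun M u := by
  have key : ∀ n q, bdLev M q = n → ∀ i, (r i q : ℕ) = bdCan (bdFu M u q) i q := by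
    intro n
    induction n using Nat.strong_induction_on with
    | _ n ih =>
      rintro q rfl i
      have hF : ∀ i, bdF M q (u i) (bdLam M (r (i + 1))) = bdFu M u q i := by
        intro i
        refine bdF_congr M q (u i) fun p hp hn => ?_
        exact bdLam_eq M u (i + 1) _ p (ih _ (bdLev_conn hp hn) p rfl (i + 1))
      have := bdUniq (bdFu M u q) (bdFu_mono M u q) (fun i => bdRes M q (r i)) (Nat.card Q) ?_ ?_ ?_ i
      · rw [← this]
        simp [bdRes, bdConn_refl]
      · intro i p
        by_cases hc : M.Conn q p
        · simp only [bdRes, hc, if_true]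
          refine le_trans (Nat.le_of_lt_succ (r i p).2) ?_
          exact Set.ncard_le_card _
        · simp [bdRes, hc]
      · intro i
        rw [← hF]
        funext p
        by_cases hc : M.Conn q p
        · conv_lhs => rw [hr i]
          simp only [bdRes, hc, if_true, bdRho]
          rw [bdF_conn hc]
          congr 1
          exact (bdRes_conn hc).symm ▸ rfl
        · rw [bdStp_off M q _ _ _ p hc]
          simp [bdRes, hc]
      · intro m
        obtain ⟨i, hi, h⟩ := hT q m
        refine ⟨i, hi, ?_⟩
        rw [← hF]
        exact h
  funext i q
  exact Fin.ext (key _ q rfl i)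

end BDAut

/-- Main Theorem: every weak alternating automaton `M` can be turned
into a backward deterministic automaton `ℬ` (state set `P`, transition function `ρ`,
generalized transition Büchi condition `T` with at most `|Q|` transition sets) with an
output function `lam` such that `f_M = f_{ℬ,lam}`; moreover, for every enumeration
`S₀, …, S_{l-1}` of the SCC's of the transition graph of `M`, the number of states of `ℬ`
is at most `∏_{j<l} (|S j| + 1) ^ |S j|`, in particular at most `(n+1)^n` for `n = |Q|`. -/
theorem weak_alternating_to_backward_deterministic {Q A : Type*} [Fintype Q]
    (M : WAA Q A) :
    ∃ (P : Type) (_ : Fintype P) (ρ : A → P → P) (k : ℕ)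
      (T : Fin k → Set (P × A × P)) (lam : P → Set Q),
      k ≤ Fintype.card Q ∧
      (∀ u : ℕ → A, ∃! r : ℕ → P, IsBackRun ρ u r ∧ GTBFinal T u r) ∧
      (∀ (u : ℕ → A) (r : ℕ → P), IsBackRun ρ u r → GTBFinal T u r →
        ∀ i, lam (r i) = {q : Q | WAA.AcceptsFrom M u i q}) ∧
      (∀ (l : ℕ) (S : Fin l → Finset Q), IsSCCEnum M S →
        Fintype.card P ≤ ∏ j : Fin l, ((S j).card + 1) ^ (S j).card) ∧
      Fintype.card P ≤ (Fintype.card Q + 1) ^ Fintype.card Q := by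
  classical
  let e := Fintype.equivFin (BDP M)
  let f := Fintype.equivFin Q
  have hsz : ∀ q, bdSz M q ≤ Fintype.card Q := fun q => by
    rw [← Nat.card_eq_fintype_card]; exact Set.ncard_le_card _
  have hcard : Fintype.card (BDP M) = ∏ q : Q, (bdSz M q + 1) := by
    simp [BDP, Fintype.card_pi]
  have hback : ∀ (u : ℕ → A) (r : ℕ → Fin (Fintype.card (BDP M))),
      IsBackRun (fun a x => e (bdRho M a (e.symm x))) u r →
      IsBackRun (bdRho M) u (fun i => e.symm (r i)) := by
    intro u r hr i
    show e.symm (r i) = _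
    rw [hr i, Equiv.symm_apply_apply]
  have huniq : ∀ (u : ℕ → A) (r : ℕ → Fin (Fintype.card (BDP M))),
      IsBackRun (fun a x => e (bdRho M a (e.symm x))) u r →
      GTBFinal (fun j : Fin (Fintype.card Q) =>
        {t | (e.symm t.1, t.2.1, e.symm t.2.2) ∈ bdT M (f.symm j)}) u r →
      (fun i => e.symm (r i)) = bdRun M u := by
    intro u r hr hT
    refine bdRun_uniq M u _ (hback u r hr) fun q m => ?_
    obtain ⟨i, hi, h⟩ := hT (f q) m
    refine ⟨i, hi, ?_⟩
    have h' : (e.symm (r i), u i, e.symm (r (i + 1))) ∈ bdT M (f.symm (f q)) := h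
    rwa [Equiv.symm_apply_apply] at h'
  refine ⟨Fin (Fintype.card (BDP M)), inferInstance, fun a x => e (bdRho M a (e.symm x)),
    Fintype.card Q, fun j => {t | (e.symm t.1, t.2.1, e.symm t.2.2) ∈ bdT M (f.symm j)},
    fun x => bdLam M (e.symm x), le_rfl, ?_, ?_, ?_, ?_⟩
  · intro u
    refine ⟨fun i => e (bdRun M u i), ⟨?_, ?_⟩, ?_⟩
    · intro i
      show e _ = e _
      rw [bdRun_back M u i, Equiv.symm_apply_apply]
    · intro j m
      obtain ⟨i, hi, h⟩ := bdRun_T M u (f.symm j) m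
      refine ⟨i, hi, ?_⟩
      show (e.symm (e (bdRun M u i)), u i, e.symm (e (bdRun M u (i + 1)))) ∈ bdT M (f.symm j)
      rwa [Equiv.symm_apply_apply, Equiv.symm_apply_apply]
    · rintro r ⟨hr, hT⟩
      have := huniq u r hr hT
      funext i
      rw [← this, Equiv.apply_symm_apply]
  · intro u r hr hT i
    have := congrFun (huniq u r hr hT) i
    show bdLam M (e.symm (r i)) = _
    rw [this, bdLam_run]
    rfl
  · intro l S hS
    rw [Fintype.card_fin, hcard]
    choose j hj hju using hS.1
    have hS' : ∀ q, bdSz M q = (S (j q)).card := by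
      intro q
      rw [bdSz, ← Set.ncard_coe_finset]
      congr 1
      ext p
      exact (hS.2 (j q) q p (hj q)).symm
    rw [← Finset.prod_fiberwise (s := Finset.univ) (g := j)]
    refine le_of_eq (Finset.prod_congr rfl fun k _ => ?_)
    have hfil : Finset.univ.filter (fun q => j q = k) = S k := by
      ext q
      simp only [Finset.mem_filter, Finset.mem_univ, true_and]
      exact ⟨fun h => h ▸ hj q, fun h => (hju q k h).symm⟩
    rw [hfil]
    rw [Finset.prod_congr rfl (g := fun _ => (S k).card + 1), Finset.prod_const]
    intro q hq
    rw [hS', ← hju q k hq]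
  · rw [Fintype.card_fin, hcard]
    calc ∏ q : Q, (bdSz M q + 1) ≤ ∏ _q : Q, (Fintype.card Q + 1) :=
          Finset.prod_le_prod' fun q _ => Nat.succ_le_succ (hsz q)
      _ = _ := by simp
end

section
/- For every very weak alternating automaton 𝒜 over an alphabet A with n states there exist a backward deterministic automaton ℬ over A with a generalized transition Büchi recurrence condition and at most 2^n states, and an output function λ from the states of ℬ to subsets of the state set of 𝒜, such that f_𝒜 = f_{ℬ,λ}. -/
/-- A weak alternating automaton is very weak if all SCC's of its transition graph are
singletons, i.e., mutually reachable states are equal. -/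
def VeryWeak {Q A : Type*} (M : WAA Q A) : Prop :=
  ∀ q q' : Q, M.Conn q q' → q = q'


namespace TCond

/-- Boolean evaluation of a transition condition. -/
def ev {Q A : Type*} (a : A) (S : Set Q) : TCond Q A → Prop
  | atom B => a ∈ B
  | next q => q ∈ S
  | or τ₀ τ₁ => τ₀.ev a S ∨ τ₁.ev a S
  | and τ₀ τ₁ => τ₀.ev a S ∧ τ₁.ev a S

theorem ev_mono {Q A : Type*} {a : A} {S S' : Set Q} (τ : TCond Q A)
    (h : ∀ q, τ.NextOccurs q → q ∈ S → q ∈ S') : τ.ev a S → τ.ev a S' := by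
  induction τ with
  | atom B => exact id
  | next q => exact h q rfl
  | or t0 t1 h0 h1 =>
    exact Or.imp (h0 fun q hq => h q (Or.inl hq)) (h1 fun q hq => h q (Or.inr hq))
  | and t0 t1 h0 h1 =>
    exact And.imp (h0 fun q hq => h q (Or.inl hq)) (h1 fun q hq => h q (Or.inr hq))

theorem ev_split {Q A : Type*} (a : A) (S : Set Q) (q : Q) (τ : TCond Q A) :
    τ.ev a S ↔ τ.ev a (S \ {q}) ∨ (τ.ev a (insert q S) ∧ q ∈ S) := by
  constructor
  · intro h
    by_cases hq : q ∈ S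
    · exact Or.inr ⟨ev_mono τ (fun _ _ h => Or.inr h) h, hq⟩
    · left
      refine ev_mono τ (fun x _ h => ⟨h, ?_⟩) h
      rintro rfl
      exact hq h
  · rintro (h | ⟨h, hq⟩)
    · exact ev_mono τ (fun _ _ h => h.1) h
    · rwa [Set.insert_eq_of_mem hq] at h

theorem Subf.trans {Q A : Type*} {x y z : TCond Q A} (h : Subf x y) (h' : Subf y z) :
    Subf x z := by
  induction h' with
  | refl => exact h
  | orL _ ih => exact Subf.orL ih
  | orR _ ih => exact Subf.orR ih
  | andL _ ih => exact Subf.andL ih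
  | andR _ ih => exact Subf.andR ih

theorem Subf.occ {Q A : Type*} {x y : TCond Q A} (h : Subf x y) (q : Q) :
    x.NextOccurs q → y.NextOccurs q := by
  induction h with
  | refl => exact id
  | orL _ ih => exact fun h => Or.inl (ih h)
  | orR _ ih => exact fun h => Or.inr (ih h)
  | andL _ ih => exact fun h => Or.inl (ih h)
  | andR _ ih => exact fun h => Or.inr (ih h)

end TCond

namespace WAA

section sig
variable {Q A O : Type*} [LinearOrder O]

/-- truth of a condition using only successors of rank at most `o` -/
def HH (u : ℕ → A) (s : ℕ → Set Q) (R : ℕ → Q → O) (i : ℕ) (o : O) (τ : TCond Q A) : Prop :=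
  τ.ev (u i) {q | q ∈ s (i + 1) ∧ R (i + 1) q ≤ o}

theorem HH_mono {u : ℕ → A} {s : ℕ → Set Q} {R : ℕ → Q → O} {i : ℕ} {o o' : O}
    {τ : TCond Q A} (h : o ≤ o') : HH u s R i o τ → HH u s R i o' τ :=
  TCond.ev_mono τ fun _ _ hq => ⟨hq.1, hq.2.trans h⟩

theorem HH_or {u : ℕ → A} {s : ℕ → Set Q} {R : ℕ → Q → O} {i : ℕ}
    {t0 t1 : TCond Q A} : (∀ o, HH u s R i o (t0.or t1) → HH u s R i o t0) ∨
      (∀ o, HH u s R i o (t0.or t1) → HH u s R i o t1) := by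
  by_contra! hc
  obtain ⟨⟨o, h1, h2⟩, ⟨o', h3, h4⟩⟩ := hc
  have h1' : HH u s R i o t1 := h1.resolve_left h2
  have h3' : HH u s R i o' t0 := h3.resolve_right h4
  rcases le_total o o' with h | h
  · exact h4 (HH_mono h h1')
  · exact h2 (HH_mono h h3')

/-- the set of admissible ranks of a vertex -/
def ranks (u : ℕ → A) (s : ℕ → Set Q) (R : ℕ → Q → O) : Vert Q A → Set O
  | (i, Sum.inl q) => {o | q ∈ s i ∧ R i q ≤ o}
  | (i, Sum.inr τ) => {o | HH u s R i o τ}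

/-- vertex set -/
def VV (M : WAA Q A) (u : ℕ → A) (s : ℕ → Set Q) (R : ℕ → Q → O) : Set (Vert Q A) :=
  {v | (∃ o, o ∈ ranks u s R v) ∧ ∀ τ, v.2 = Sum.inr τ → ∃ q, TCond.Subf τ (M.δ q)}

/-- edges -/
def EE (M : WAA Q A) (u : ℕ → A) (s : ℕ → Set Q) (R : ℕ → Q → O) :
    Vert Q A → Vert Q A → Prop
  | (i, Sum.inl q), w => w = (i, Sum.inr (M.δ q))
  | (_, Sum.inr (TCond.atom _)), _ => False
  | (i, Sum.inr (TCond.next q)), w => w = (i + 1, Sum.inl q)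
  | (i, Sum.inr (TCond.or t0 t1)), w =>
      (w = (i, Sum.inr t0) ∧ ∀ o, HH u s R i o (t0.or t1) → HH u s R i o t0) ∨
      (w = (i, Sum.inr t1) ∧ ∀ o, HH u s R i o (t0.or t1) → HH u s R i o t1)
  | (i, Sum.inr (TCond.and t0 t1)), w => w = (i, Sum.inr t0) ∨ w = (i, Sum.inr t1)

theorem ranks_step {M : WAA Q A} {u : ℕ → A} {s : ℕ → Set Q} {R : ℕ → Q → O}
    (hR : ∀ i q, q ∈ s i → ∃ o ≤ R i q, (q ∉ M.recurring → o < R i q) ∧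
      HH u s R i o (M.δ q)) {v w : Vert Q A} (h : EE M u s R v w) :
    ranks u s R v ⊆ ranks u s R w := by
  obtain ⟨i, q | (B | q | ⟨t0, t1⟩ | ⟨t0, t1⟩)⟩ := v
  · obtain rfl := h
    rintro o ⟨h1, h2⟩
    obtain ⟨o', h3, _, h4⟩ := hR i q h1
    exact HH_mono (h3.trans h2) h4
  · exact h.elim
  · obtain rfl := h
    exact fun o h => h
  · rcases h with ⟨rfl, h⟩ | ⟨rfl, h⟩
    · exact h
    · exact h
  · rcases h with rfl | rfl
    · exact fun o h => h.1
    · exact fun o h => h.2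

theorem VV_step {M : WAA Q A} {u : ℕ → A} {s : ℕ → Set Q} {R : ℕ → Q → O}
    (hR : ∀ i q, q ∈ s i → ∃ o ≤ R i q, (q ∉ M.recurring → o < R i q) ∧
      HH u s R i o (M.δ q)) {v w : Vert Q A} (h : EE M u s R v w) (hv : v ∈ VV M u s R) :
    w ∈ VV M u s R := by
  obtain ⟨⟨o, ho⟩, hs⟩ := hv
  refine ⟨⟨o, ranks_step hR h ho⟩, ?_⟩
  obtain ⟨i, q | (B | q | ⟨t0, t1⟩ | ⟨t0, t1⟩)⟩ := v
  · obtain rfl := h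
    rintro τ hτ
    obtain rfl := Sum.inr.inj hτ
    exact ⟨q, .refl _⟩
  · exact h.elim
  · obtain rfl := h
    rintro τ hτ
    cases hτ
  · obtain ⟨q, hq⟩ := hs _ rfl
    rcases h with ⟨rfl, h⟩ | ⟨rfl, h⟩ <;> rintro τ hτ <;> obtain rfl := Sum.inr.inj hτ
    · exact ⟨q, (TCond.Subf.orL (.refl _)).trans hq⟩
    · exact ⟨q, (TCond.Subf.orR (.refl _)).trans hq⟩
  · obtain ⟨q, hq⟩ := hs _ rfl
    rcases h with rfl | rfl <;> rintro τ hτ <;> obtain rfl := Sum.inr.inj hτ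
    · exact ⟨q, (TCond.Subf.andL (.refl _)).trans hq⟩
    · exact ⟨q, (TCond.Subf.andR (.refl _)).trans hq⟩

/-- the run graph built from a rank function -/
def sigGraph (M : WAA Q A) (u : ℕ → A) (s : ℕ → Set Q) (R : ℕ → Q → O)
    (hR : ∀ i q, q ∈ s i → ∃ o ≤ R i q, (q ∉ M.recurring → o < R i q) ∧
      HH u s R i o (M.δ q)) : RunGraph M u where
  V := VV M u s R
  E v w := v ∈ VV M u s R ∧ EE M u s R v w
  edge_mem v w h := ⟨h.1, VV_step hR h.2 h.1⟩
  cond_subf i τ h := h.2 τ rfl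
  state_succ i q h w := ⟨fun h => h.2, fun h' => ⟨h, h'⟩⟩
  next_succ i q h w := ⟨fun h => h.2, fun h' => ⟨h, h'⟩⟩
  or_succ_subset i t0 t1 h w hw := by
    rcases hw.2 with h | h
    · exact Or.inl h.1
    · exact Or.inr h.1
  or_succ_exists i t0 t1 h := by
    rcases HH_or (u := u) (s := s) (R := R) (i := i) (t0 := t0) (t1 := t1) with h' | h'
    · exact ⟨_, h, Or.inl ⟨rfl, h'⟩⟩
    · exact ⟨_, h, Or.inr ⟨rfl, h'⟩⟩
  and_succ i t0 t1 h w := ⟨fun h => h.2, fun h' => ⟨h, h'⟩⟩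
  atom_succ i B w h := h.2
  atom_ok i B h := by
    obtain ⟨⟨o, ho⟩, -⟩ := h
    exact ho

theorem accepts_of_rank [WellFoundedLT O] (M : WAA Q A) (u : ℕ → A) (s : ℕ → Set Q)
    (R : ℕ → Q → O)
    (hR : ∀ i q, q ∈ s i → ∃ o ≤ R i q, (q ∉ M.recurring → o < R i q) ∧
      HH u s R i o (M.δ q)) (i : ℕ) (q : Q) (hq : q ∈ s i) : M.AcceptsFrom u i q := by
  refine ⟨sigGraph M u s R hR, ?_, ⟨⟨R i q, hq, le_rfl⟩, fun τ h => by cases h⟩⟩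
  intro p hp q hinf
  by_contra hrec
  have hmono : ∀ n m, n ≤ m → ranks u s R (p n) ⊆ ranks u s R (p m) := by
    intro n m h
    induction m, h using Nat.le_induction with
    | base => exact subset_rfl
    | succ m _ ih => exact ih.trans (ranks_step hR (hp m).2)
  have hne : (⋃ n, ranks u s R (p n)).Nonempty := by
    obtain ⟨o, ho⟩ := (hp 0).1.1
    exact ⟨o, Set.mem_iUnion.2 ⟨0, ho⟩⟩
  obtain ⟨o, ho, hmin⟩ := WellFounded.has_min (wellFounded_lt (α := O)) _ hne
  obtain ⟨m, hm⟩ := Set.mem_iUnion.1 ho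
  obtain ⟨n, hmn, hn⟩ := hinf m
  have h1 := hmono m n hmn hm
  have h2 := (hp n).2
  generalize hv : p n = v at *
  obtain ⟨j, x⟩ := v
  obtain rfl : x = Sum.inl q := hn
  obtain ⟨hs, hle⟩ : q ∈ s j ∧ R j q ≤ o := h1
  obtain ⟨o', _, h3, h4⟩ := hR j q hs
  have h5 : p (n + 1) = (j, Sum.inr (M.δ q)) := h2
  refine hmin o' (Set.mem_iUnion.2 ⟨n + 1, ?_⟩) ((h3 hrec).trans_le hle)
  rw [h5]
  exact h4

end sig

section main
variable {Q A : Type*}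

/-- level of a state -/
noncomputable def level (M : WAA Q A) (q : Q) : ℕ :=
  Set.ncard {r | Relation.ReflTransGen M.Edge q r}

theorem level_lt [Finite Q] {M : WAA Q A} (hvw : VeryWeak M) {q q' : Q}
    (h : (M.δ q).NextOccurs q') (hne : q' ≠ q) : M.level q' < M.level q := by
  apply Set.ncard_lt_ncard _ (Set.toFinite _)
  refine ⟨fun r hr => Relation.ReflTransGen.head h hr, fun hss => hne ?_⟩
  exact hvw q' q ⟨hss Relation.ReflTransGen.refl, Relation.ReflTransGen.single h⟩

/-- local acceptance -/
def TT (M : WAA Q A) (q : Q) (x : Set Q) (a : A) (y : Set Q) : Prop :=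
  (q ∈ M.recurring ∧ (q ∈ x ∨ ¬ (M.δ q).ev a (insert q y))) ∨
  (q ∉ M.recurring ∧ (q ∉ x ∨ (M.δ q).ev a (y \ {q})))

/-- a final backward run, on sets -/
structure Good (M : WAA Q A) (u : ℕ → A) (s : ℕ → Set Q) : Prop where
  run : ∀ i q, q ∈ s i ↔ (M.δ q).ev (u i) (s (i + 1))
  fin : ∀ q m, ∃ i, m ≤ i ∧ M.TT q (s i) (u i) (s (i + 1))

theorem Good.sound [Finite Q] {M : WAA Q A} (hvw : VeryWeak M) {u : ℕ → A}
    {s : ℕ → Set Q} (hs : Good M u s) (i : ℕ) (q : Q) (hq : q ∈ s i) :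
    M.AcceptsFrom u i q := by
  classical
  let D : ℕ → Q → Set ℕ := fun i q => {d | (M.δ q).ev (u (i + d)) (s (i + d + 1) \ {q})}
  let R : ℕ → Q → ℕ ×ₗ ℕ := fun i q =>
    toLex (M.level q, if q ∈ M.recurring then 0 else sInf (D i q) + 1)
  have hlow : ∀ (i j : ℕ) (q q' : Q) (n : ℕ), (M.δ q).NextOccurs q' → q' ≠ q →
      R j q' ≤ toLex (M.level q, n) := by
    intro i j q q' n h hne
    exact (Prod.Lex.toLex_lt_toLex.2 (Or.inl (level_lt hvw h hne))).le
  refine accepts_of_rank M u s R ?_ i q hq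
  clear hq i q
  intro i q hq
  by_cases hrec : q ∈ M.recurring
  · refine ⟨R i q, le_rfl, fun h => (h hrec).elim, ?_⟩
    refine TCond.ev_mono _ ?_ ((hs.run i q).1 hq)
    intro q' ho hq'
    refine ⟨hq', ?_⟩
    by_cases hne : q' = q
    · subst hne
      simp [R, hrec]
    · exact hlow i _ _ _ _ ho hne
  · have hne : (D i q).Nonempty := by
      by_contra hemp
      have hF : ∀ d, ¬ (M.δ q).ev (u (i + d)) (s (i + d + 1) \ {q}) := by
        intro d hd
        exact hemp ⟨d, hd⟩
      have hx : ∀ d, q ∈ s (i + d) := by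
        intro d
        induction d with
        | zero => exact hq
        | succ d ih =>
          have := (TCond.ev_split _ _ q _).1 ((hs.run _ q).1 ih)
          exact (this.resolve_left (hF d)).2
      obtain ⟨j, hj, hT⟩ := hs.fin q i
      obtain ⟨d, rfl⟩ := Nat.exists_eq_add_of_le hj
      rcases hT with h | ⟨_, h | h⟩
      · exact hrec h.1
      · exact h (hx d)
      · exact hF d h
    by_cases h0 : (M.δ q).ev (u i) (s (i + 1) \ {q})
    · refine ⟨toLex (M.level q, 0), ?_, fun _ => ?_, ?_⟩
      · simp [R, hrec, Prod.Lex.toLex_le_toLex]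
      · simp [R, hrec, Prod.Lex.toLex_lt_toLex]
      · refine TCond.ev_mono _ ?_ h0
        intro q' ho hq'
        exact ⟨hq'.1, hlow i _ _ _ _ ho hq'.2⟩
    · have hm : sInf (D i q) ∈ D i q := Nat.sInf_mem hne
      have hlt : sInf (D (i + 1) q) < sInf (D i q) := by
        obtain ⟨e, he⟩ | he := (Nat.eq_zero_or_pos (sInf (D i q))).symm.imp_left
          (fun h => Nat.exists_eq_succ_of_ne_zero h.ne')
        · rw [he] at hm ⊢
          refine Nat.lt_succ_of_le (Nat.sInf_le ?_)
          have : i + e.succ = i + 1 + e := by omega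
          simpa only [D, Set.mem_setOf_eq, this] using hm
        · rw [he] at hm
          exact (h0 hm).elim
      refine ⟨R (i + 1) q, ?_, fun _ => ?_, ?_⟩
      · simp [R, hrec, Prod.Lex.toLex_le_toLex, hlt.le]
      · simp [R, hrec, Prod.Lex.toLex_lt_toLex, hlt]
      · refine TCond.ev_mono _ ?_ ((hs.run i q).1 hq)
        intro q' ho hq'
        refine ⟨hq', ?_⟩
        by_cases hne : q' = q
        · subst hne; exact le_rfl
        · exact hlow i _ _ _ _ ho hne

theorem RunGraph.ev_of_mem {M : WAA Q A} {u : ℕ → A} (G : RunGraph M u) (i : ℕ)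
    (τ : TCond Q A) (h : (i, Sum.inr τ) ∈ G.V) :
    τ.ev (u i) {q | (i + 1, Sum.inl q) ∈ G.V} := by
  induction τ with
  | atom B => exact G.atom_ok i B h
  | next q => exact (G.edge_mem ((G.next_succ i q h _).2 rfl)).2
  | or t0 t1 h0 h1 =>
    obtain ⟨w, hw⟩ := G.or_succ_exists i t0 t1 h
    have hm := (G.edge_mem hw).2
    rcases G.or_succ_subset i t0 t1 h w hw with rfl | rfl
    · exact Or.inl (h0 hm)
    · exact Or.inr (h1 hm)
  | and t0 t1 h0 h1 =>
    exact ⟨h0 (G.edge_mem ((G.and_succ i t0 t1 h _).2 (Or.inl rfl))).2,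
      h1 (G.edge_mem ((G.and_succ i t0 t1 h _).2 (Or.inr rfl))).2⟩

theorem RunGraph.delta_mem {M : WAA Q A} {u : ℕ → A} (G : RunGraph M u) (i : ℕ)
    (q : Q) (h : (i, Sum.inl q) ∈ G.V) : (i, Sum.inr (M.δ q)) ∈ G.V :=
  (G.edge_mem ((G.state_succ i q h _).2 rfl)).2

/-- size of a condition -/
def tsize : TCond Q A → ℕ
  | .atom _ => 0
  | .next _ => 0
  | .or a b => tsize a + tsize b + 1
  | .and a b => tsize a + tsize b + 1

/-- vertices of a bad path -/
def Bad {M : WAA Q A} {u : ℕ → A} (G : RunGraph M u) (s : ℕ → Set Q) (q : Q)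
    (v : Vert Q A) : Prop :=
  v ∈ G.V ∧ q ∉ s v.1 ∧ (v.1, Sum.inl q) ∈ G.V ∧
    (v.2 = Sum.inl q ∨ ∃ τ, v.2 = Sum.inr τ ∧ TCond.Subf τ (M.δ q) ∧
      ¬ τ.ev (u v.1) (s (v.1 + 1) \ {q}))

theorem Bad.step {M : WAA Q A} {u : ℕ → A} {G : RunGraph M u} {s : ℕ → Set Q}
    (hs : Good M u s) {q : Q}
    (ih : ∀ q' i, (M.δ q).NextOccurs q' → q' ≠ q → (i, Sum.inl q') ∈ G.V → q' ∈ s i)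
    {v : Vert Q A} (hv : Bad G s q v) :
    ∃ w, G.E v w ∧ Bad G s q w ∧ (w.2 = Sum.inl q ∨
      ∃ τ, w.2 = Sum.inr τ ∧ ∀ τ', v.2 = Sum.inr τ' → tsize τ < tsize τ') := by
  obtain ⟨i, x⟩ := v
  obtain ⟨h1, h2, h3, h4⟩ := hv
  dsimp only at *
  have hnot := mt (hs.run i q).2 h2
  rw [TCond.ev_split _ _ q] at hnot
  push Not at hnot
  obtain ⟨hF, hG⟩ := hnot
  rcases h4 with rfl | ⟨τ, rfl, hsub, hτ⟩
  · exact ⟨_, (G.state_succ i q h1 _).2 rfl,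
      ⟨G.delta_mem i q h1, h2, h3, Or.inr ⟨_, rfl, .refl _, hF⟩⟩,
      Or.inr ⟨_, rfl, fun _ h => by cases h⟩⟩
  · cases τ with
    | atom B => exact (hτ (G.atom_ok i B h1)).elim
    | next q' =>
      have hE := (G.next_succ i q' h1 _).2 rfl
      have hm := (G.edge_mem hE).2
      obtain rfl : q' = q := by
        by_contra hne
        exact hτ ⟨ih q' _ (hsub.occ q' rfl) hne hm, hne⟩
      refine ⟨_, hE, ⟨hm, ?_, hm, Or.inl rfl⟩, Or.inl rfl⟩
      apply hG
      refine TCond.ev_mono _ ?_ (G.ev_of_mem i _ (G.delta_mem i _ h3))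
      intro x hx hxV
      by_cases hne : x = q'
      · exact Or.inl hne
      · exact Or.inr (ih x _ hx hne hxV)
    | or t0 t1 =>
      obtain ⟨w, hw⟩ := G.or_succ_exists i t0 t1 h1
      have hm := (G.edge_mem hw).2
      rcases G.or_succ_subset i t0 t1 h1 w hw with rfl | rfl
      · refine ⟨_, hw, ⟨hm, h2, h3, Or.inr ⟨_, rfl, (TCond.Subf.orL (.refl _)).trans hsub,
          fun h => hτ (Or.inl h)⟩⟩, Or.inr ⟨_, rfl, fun _ h => ?_⟩⟩
        obtain rfl := Sum.inr.inj h
        simp only [tsize]; omega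
      · refine ⟨_, hw, ⟨hm, h2, h3, Or.inr ⟨_, rfl, (TCond.Subf.orR (.refl _)).trans hsub,
          fun h => hτ (Or.inr h)⟩⟩, Or.inr ⟨_, rfl, fun _ h => ?_⟩⟩
        obtain rfl := Sum.inr.inj h
        simp only [tsize]; omega
    | and t0 t1 =>
      by_cases h0 : t0.ev (u i) (s (i + 1) \ {q})
      · have hw := (G.and_succ i t0 t1 h1 _).2 (Or.inr rfl)
        refine ⟨_, hw, ⟨(G.edge_mem hw).2, h2, h3, Or.inr ⟨_, rfl,
          (TCond.Subf.andR (.refl _)).trans hsub,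
          fun h => hτ ⟨h0, h⟩⟩⟩, Or.inr ⟨_, rfl, fun _ h => ?_⟩⟩
        obtain rfl := Sum.inr.inj h
        simp only [tsize]; omega
      · have hw := (G.and_succ i t0 t1 h1 _).2 (Or.inl rfl)
        refine ⟨_, hw, ⟨(G.edge_mem hw).2, h2, h3, Or.inr ⟨_, rfl,
          (TCond.Subf.andL (.refl _)).trans hsub, h0⟩⟩, Or.inr ⟨_, rfl, fun _ h => ?_⟩⟩
        obtain rfl := Sum.inr.inj h
        simp only [tsize]; omega

theorem Good.complete [Finite Q] {M : WAA Q A} (hvw : VeryWeak M) {u : ℕ → A}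
    {s : ℕ → Set Q} (hs : Good M u s) (G : RunGraph M u) (hG : G.Final) (q : Q) :
    ∀ i, (i, Sum.inl q) ∈ G.V → q ∈ s i := by
  induction hl : M.level q using Nat.strong_induction_on generalizing q with
  | _ l IH =>
  have ih : ∀ q' i, (M.δ q).NextOccurs q' → q' ≠ q → (i, Sum.inl q') ∈ G.V → q' ∈ s i :=
    fun q' i ho hne => IH _ (hl ▸ level_lt hvw ho hne) q' rfl i
  clear IH hl
  have hGi : ∀ i, (i, Sum.inl q) ∈ G.V → (M.δ q).ev (u i) (insert q (s (i + 1))) := by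
    intro i hi
    refine TCond.ev_mono _ ?_ (G.ev_of_mem i _ (G.delta_mem i _ hi))
    intro x hx hxV
    by_cases hne : x = q
    · exact Or.inl hne
    · exact Or.inr (ih x _ hx hne hxV)
  by_cases hrec : q ∈ M.recurring
  · have key : ∀ d i, (q ∈ s (i + d) ∨
        ¬ (M.δ q).ev (u (i + d)) (insert q (s (i + d + 1)))) →
        (i, Sum.inl q) ∈ G.V → q ∈ s i := by
      intro d
      induction d with
      | zero =>
        rintro i (h | h) hi
        · exact h
        · exact (h (hGi i hi)).elim
      | succ d ihd =>
        intro i h hi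
        rw [hs.run, TCond.ev_split _ _ q]
        by_cases hm : (i + 1, Sum.inl q) ∈ G.V
        · refine Or.inr ⟨hGi i hi, ihd (i + 1) ?_ hm⟩
          have : i + 1 + d = i + (d + 1) := by omega
          rw [this]; exact h
        · left
          refine TCond.ev_mono _ ?_ (G.ev_of_mem i _ (G.delta_mem i _ hi))
          intro x hx hxV
          have hne : x ≠ q := by rintro rfl; exact hm hxV
          exact ⟨ih x _ hx hne hxV, hne⟩
    intro i hi
    obtain ⟨j, hj, hT⟩ := hs.fin q i
    obtain ⟨d, rfl⟩ := Nat.exists_eq_add_of_le hj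
    rcases hT with h | h
    · exact key d i h.2 hi
    · exact (h.1 hrec).elim
  · intro i hi
    by_contra hq
    choose f hf using fun v : {v // Bad G s q v} => Bad.step hs ih v.2
    let st : ℕ → {v // Bad G s q v} := fun n =>
      Nat.rec ⟨(i, Sum.inl q), hi, hq, hi, Or.inl rfl⟩ (fun _ v => ⟨f v, (hf v).2.1⟩) n
    have hst : ∀ n, (st (n + 1)).1 = f (st n) := fun n => rfl
    refine hrec (hG (fun n => (st n).1) (fun n => ?_) q ?_)
    · rw [hst]; exact (hf (st n)).1
    · have key : ∀ k n τ, (st n).1.2 = Sum.inr τ → tsize τ ≤ k →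
          ∃ n', n ≤ n' ∧ (st n').1.2 = Sum.inl q := by
        intro k
        induction k with
        | zero =>
          intro n τ h hk
          rcases (hf (st n)).2.2 with h' | ⟨τ', h', h''⟩
          · exact ⟨n + 1, by omega, h'⟩
          · have := h'' _ h; omega
        | succ k ihk =>
          intro n τ h hk
          rcases (hf (st n)).2.2 with h' | ⟨τ', h', h''⟩
          · exact ⟨n + 1, by omega, h'⟩
          · have := h'' _ h
            obtain ⟨n', h1, h2⟩ := ihk (n + 1) τ' h' (by omega)
            exact ⟨n', by omega, h2⟩
      intro m
      rcases (st m).2.2.2.2 with h | ⟨τ, h, _⟩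
      · exact ⟨m, le_rfl, h⟩
      · exact key _ m τ h le_rfl

theorem Good.eq [Finite Q] {M : WAA Q A} (hvw : VeryWeak M) {u : ℕ → A}
    {s : ℕ → Set Q} (hs : Good M u s) (i : ℕ) : s i = {q | M.AcceptsFrom u i q} := by
  ext q
  exact ⟨hs.sound hvw i q, fun ⟨G, hG, h⟩ => hs.complete hvw G hG q i h⟩

theorem lfp_run (F G : ℕ → Prop) (i : ℕ) :
    (∃ j, i ≤ j ∧ F j ∧ ∀ k, i ≤ k → k < j → G k) ↔
      F i ∨ (G i ∧ ∃ j, i + 1 ≤ j ∧ F j ∧ ∀ k, i + 1 ≤ k → k < j → G k) := by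
  constructor
  · rintro ⟨j, hj, hF, hG⟩
    rcases hj.eq_or_lt with rfl | hj
    · exact Or.inl hF
    · exact Or.inr ⟨hG i le_rfl hj, j, hj, hF, fun k hk => hG k (by omega)⟩
  · rintro (h | ⟨h, j, hj, hF, hG⟩)
    · exact ⟨i, le_rfl, h, fun k _ _ => by omega⟩
    · refine ⟨j, by omega, hF, fun k hk hkj => ?_⟩
      rcases hk.eq_or_lt with rfl | hk
      · exact h
      · exact hG k hk hkj

theorem gfp_run (F G : ℕ → Prop) (hFG : ∀ i, F i → G i) (i : ℕ) :
    (∀ j, i ≤ j → (∀ k, i ≤ k → k < j → ¬ F k) → G j) ↔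
      F i ∨ (G i ∧ ∀ j, i + 1 ≤ j → (∀ k, i + 1 ≤ k → k < j → ¬ F k) → G j) := by
  constructor
  · intro h
    by_cases hF : F i
    · exact Or.inl hF
    · refine Or.inr ⟨h i le_rfl fun k _ _ => by omega, fun j hj hk => h j (by omega) ?_⟩
      intro k hk1 hkj
      rcases hk1.eq_or_lt with rfl | hk1
      · exact hF
      · exact hk k hk1 hkj
  · rintro (h | ⟨h, h'⟩) j hj hk
    · rcases hj.eq_or_lt with rfl | hj
      · exact hFG _ h
      · exact (hk i le_rfl hj h).elim
    · rcases hj.eq_or_lt with rfl | hj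
      · exact h
      · exact h' j hj fun k hk1 => hk k (by omega)

/-- fixed points -/
def fixpt (c : Prop) (F G : ℕ → Prop) (i : ℕ) : Prop :=
  (c ∧ ∀ j, i ≤ j → (∀ k, i ≤ k → k < j → ¬ F k) → G j) ∨
  (¬ c ∧ ∃ j, i ≤ j ∧ F j ∧ ∀ k, i ≤ k → k < j → G k)

theorem exists_good [Finite Q] {M : WAA Q A} (hvw : VeryWeak M) (u : ℕ → A) :
    ∃ s, Good M u s := by
  have wf : WellFounded (fun q' q : Q => M.level q' < M.level q) :=
    InvImage.wf M.level wellFounded_lt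
  let lo : (q : Q) → ((q' : Q) → M.level q' < M.level q → ℕ → Prop) → ℕ → Set Q :=
    fun q ih j => {q' | ∃ h : M.level q' < M.level q, ih q' h j}
  let step : (q : Q) → ((q' : Q) → M.level q' < M.level q → ℕ → Prop) → ℕ → Prop :=
    fun q ih => fixpt (q ∈ M.recurring)
      (fun j => (M.δ q).ev (u j) (lo q ih (j + 1)))
      (fun j => (M.δ q).ev (u j) (insert q (lo q ih (j + 1))))
  let b : Q → ℕ → Prop := wf.fix step
  let s : ℕ → Set Q := fun j => {q | b q j}
  have hF : ∀ q j, (M.δ q).ev (u j) (lo q (fun q' _ => b q') (j + 1)) ↔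
      (M.δ q).ev (u j) (s (j + 1) \ {q}) := by
    intro q j
    constructor <;> refine TCond.ev_mono _ ?_
    · rintro q' _ ⟨h, hb⟩
      exact ⟨hb, by rintro rfl; exact lt_irrefl _ h⟩
    · rintro q' ho ⟨hb, hne⟩
      exact ⟨level_lt hvw ho hne, hb⟩
  have hG : ∀ q j, (M.δ q).ev (u j) (insert q (lo q (fun q' _ => b q') (j + 1))) ↔
      (M.δ q).ev (u j) (insert q (s (j + 1))) := by
    intro q j
    constructor <;> refine TCond.ev_mono _ ?_
    · rintro q' _ (rfl | ⟨h, hb⟩)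
      · exact Or.inl rfl
      · exact Or.inr hb
    · intro q' ho hb
      by_cases hne : q' = q
      · exact Or.inl hne
      · exact Or.inr ⟨level_lt hvw ho hne, hb.resolve_left hne⟩
  have hb : ∀ q, b q = fixpt (q ∈ M.recurring)
      (fun j => (M.δ q).ev (u j) (s (j + 1) \ {q}))
      (fun j => (M.δ q).ev (u j) (insert q (s (j + 1)))) := by
    intro q
    have h : b q = step q (fun q' _ => b q') := wf.fix_eq step q
    rw [h]
    simp only [step, hF, hG]
  have hFG : ∀ q j, (M.δ q).ev (u j) (s (j + 1) \ {q}) →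
      (M.δ q).ev (u j) (insert q (s (j + 1))) := fun q j =>
    TCond.ev_mono _ fun _ _ h => Or.inr h.1
  refine ⟨s, ⟨fun i q => ?_, fun q m => ?_⟩⟩
  · rw [TCond.ev_split _ _ q]
    change b q i ↔ _ ∨ (_ ∧ b q (i + 1))
    rw [hb]
    by_cases hc : q ∈ M.recurring
    · simp only [fixpt, hc, true_and, not_true_eq_false, false_and, or_false]
      exact gfp_run _ _ (hFG q) i
    · simp only [fixpt, hc, true_and, not_false_eq_true, false_and, false_or]
      exact lfp_run _ _ i
  · by_cases hc : q ∈ M.recurring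
    · by_cases hx : q ∈ s m
      · exact ⟨m, le_rfl, Or.inl ⟨hc, Or.inl hx⟩⟩
      · change ¬ b q m at hx
        rw [hb] at hx
        simp only [fixpt, hc, true_and, not_true_eq_false, false_and, or_false] at hx
        push Not at hx
        obtain ⟨j, hj, _, hn⟩ := hx
        exact ⟨j, hj, Or.inl ⟨hc, Or.inr hn⟩⟩
    · by_cases hx : q ∈ s m
      · change b q m at hx
        rw [hb] at hx
        simp only [fixpt, hc, true_and, not_false_eq_true, false_and, false_or] at hx
        obtain ⟨j, hj, hn, _⟩ := hx
        exact ⟨j, hj, Or.inr ⟨hc, Or.inr hn⟩⟩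
      · exact ⟨m, le_rfl, Or.inr ⟨hc, Or.inl hx⟩⟩

end main

end WAA

/-- for every very weak alternating automaton `M` with `n` states there
are a backward deterministic automaton with a generalized transition Büchi condition and
at most `2 ^ n` states and an output function `lam` such that `f_M = f_{ℬ,lam}`. -/
theorem very_weak_alternating_to_backward_deterministic {Q A : Type*} [Fintype Q]
    (M : WAA Q A) (hvw : VeryWeak M) :
    ∃ (P : Type) (_ : Fintype P) (ρ : A → P → P) (k : ℕ)
      (T : Fin k → Set (P × A × P)) (lam : P → Set Q),
      Fintype.card P ≤ 2 ^ Fintype.card Q ∧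
      (∀ u : ℕ → A, ∃! r : ℕ → P, IsBackRun ρ u r ∧ GTBFinal T u r) ∧
      (∀ (u : ℕ → A) (r : ℕ → P), IsBackRun ρ u r → GTBFinal T u r →
        ∀ i, lam (r i) = {q : Q | WAA.AcceptsFrom M u i q}) := by
  classical
  let e := Fintype.equivFin Q
  let lam : Set (Fin (Fintype.card Q)) → Set Q := fun S => {q | e q ∈ S}
  let cod : Set Q → Set (Fin (Fintype.card Q)) := fun S => {j | e.symm j ∈ S}
  have hlc : ∀ S, lam (cod S) = S := fun S => by ext q; simp [lam, cod]
  have hcl : ∀ S, cod (lam S) = S := fun S => by ext q; simp [lam, cod]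
  let ρ : A → Set (Fin (Fintype.card Q)) → Set (Fin (Fintype.card Q)) :=
    fun a S => cod {q | (M.δ q).ev a (lam S)}
  let T : Fin (Fintype.card Q) →
      Set (Set (Fin (Fintype.card Q)) × A × Set (Fin (Fintype.card Q))) :=
    fun j => {t | M.TT (e.symm j) (lam t.1) t.2.1 (lam t.2.2)}
  have good : ∀ u r, IsBackRun ρ u r → GTBFinal T u r →
      WAA.Good M u (fun i => lam (r i)) := by
    intro u r h1 h2
    refine ⟨fun i q => ?_, fun q m => ?_⟩
    · have h := h1 i
      have h' : lam (r i) = {q | (M.δ q).ev (u i) (lam (r (i + 1)))} := by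
        rw [h]; exact hlc _
      simp only [h', Set.mem_setOf_eq]
    · obtain ⟨i, hi, h⟩ := h2 (e q) m
      refine ⟨i, hi, ?_⟩
      simpa [T] using h
  have main : ∀ u r, IsBackRun ρ u r → GTBFinal T u r →
      ∀ i, lam (r i) = {q : Q | WAA.AcceptsFrom M u i q} :=
    fun u r h1 h2 i => (good u r h1 h2).eq hvw i
  refine ⟨Set (Fin (Fintype.card Q)), inferInstance, ρ, Fintype.card Q, T, lam, ?_, ?_, main⟩
  · simp
  · intro u
    obtain ⟨s, hs⟩ := WAA.exists_good hvw u
    refine ⟨fun i => cod (s i), ⟨fun i => ?_, fun j m => ?_⟩, ?_⟩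
    · simp only [ρ, hlc]
      congr 1
      ext q
      exact hs.run i q
    · obtain ⟨i, hi, h⟩ := hs.fin (e.symm j) m
      refine ⟨i, hi, ?_⟩
      simpa only [T, Set.mem_setOf_eq, hlc] using h
    · rintro r ⟨h1, h2⟩
      funext i
      rw [hs.eq hvw i, ← main u r h1 h2 i, hcl]
end

section
/- For every weak alternating automaton 𝒜 over an alphabet A with n states, augmented with a set I of initial states, there exists a backward deterministic automaton over A with a generalized transition Büchi recurrence condition and at most (n+1)^n states which, augmented with a suitable set of initial states, recognizes the same ω-language as 𝒜, namely {u | some q ∈ I accepts u[0,ω)}. -/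
namespace BD
open Classical

section ev
variable {Q A α : Type*}

noncomputable def val [LinearOrder α] [BoundedOrder α] (d : Prop) (a : A) (g : Q → α) : TCond Q A → α
  | .atom B => if (a ∈ B ↔ ¬ d) then ⊥ else ⊤
  | .next q => g q
  | .or s t => if d then max (val d a g s) (val d a g t) else min (val d a g s) (val d a g t)
  | .and s t => if d then min (val d a g s) (val d a g t) else max (val d a g s) (val d a g t)

def gs (d : Prop) (a : A) (Z : Q → Prop) : TCond Q A → Prop
  | .atom B => (a ∈ B ↔ ¬ d)
  | .next q => Z q
  | .or s t => if d then (gs d a Z s ∧ gs d a Z t) else (gs d a Z s ∨ gs d a Z t)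
  | .and s t => if d then (gs d a Z s ∨ gs d a Z t) else (gs d a Z s ∧ gs d a Z t)

theorem val_le [LinearOrder α] [BoundedOrder α] (d : Prop) (a : A) (g : Q → α) (v : α) (hv : v ≠ ⊤)
    (τ : TCond Q A) : val d a g τ ≤ v ↔ gs d a (fun q => g q ≤ v) τ := by
  induction τ with
  | atom B => by_cases h : (a ∈ B ↔ ¬ d) <;> simp [val, gs, h, hv]
  | next q => rfl
  | or s t h1 h2 => by_cases d <;> simp_all [val, gs]
  | and s t h1 h2 => by_cases d <;> simp_all [val, gs]

theorem val_lt [LinearOrder α] [BoundedOrder α] (d : Prop) (a : A) (g : Q → α) (v : α) (hv : ⊥ < v)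
    (τ : TCond Q A) : val d a g τ < v ↔ gs d a (fun q => g q < v) τ := by
  induction τ with
  | atom B => by_cases h : (a ∈ B ↔ ¬ d) <;> simp [val, gs, h, hv]
  | next q => rfl
  | or s t h1 h2 => by_cases d <;> simp_all [val, gs]
  | and s t h1 h2 => by_cases d <;> simp_all [val, gs]

theorem gs_mono (d : Prop) (a : A) (Z Z' : Q → Prop) (τ : TCond Q A)
    (h : ∀ q, τ.NextOccurs q → Z q → Z' q) : gs d a Z τ → gs d a Z' τ := by
  induction τ with
  | atom B => exact id
  | next q => exact h q rfl
  | or s t h1 h2 =>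
    have h1 := h1 fun q hq => h q (Or.inl hq)
    have h2 := h2 fun q hq => h q (Or.inr hq)
    by_cases d <;> simp_all [gs] <;> tauto
  | and s t h1 h2 =>
    have h1 := h1 fun q hq => h q (Or.inl hq)
    have h2 := h2 fun q hq => h q (Or.inr hq)
    by_cases d <;> simp_all [gs] <;> tauto

theorem gs_not (d : Prop) (a : A) (Z : Q → Prop) (τ : TCond Q A) :
    ¬ gs d a Z τ ↔ gs (¬ d) a (fun q => ¬ Z q) τ := by
  induction τ with
  | atom B => simp only [gs]; tauto
  | next q => rfl
  | or s t h1 h2 => by_cases d <;> simp_all [gs] <;> tauto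
  | and s t h1 h2 => by_cases d <;> simp_all [gs] <;> tauto

theorem val_rel [LinearOrder α] [BoundedOrder α] (d : Prop) (a : A) (g g' : Q → α)
    (Rel : α → α → Prop) (hb : Rel ⊥ ⊥) (ht : Rel ⊤ ⊤)
    (hm : ∀ v v' w w', Rel v v' → Rel w w' → (v ≤ w ↔ v' ≤ w'))
    (hg : ∀ q, Rel (g q) (g' q)) (τ : TCond Q A) : Rel (val d a g τ) (val d a g' τ) := by
  have hmin : ∀ v v' w w', Rel v v' → Rel w w' → Rel (min v w) (min v' w') := by
    intro v v' w w' h1 h2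
    rcases le_total v w with h | h
    · rw [min_eq_left h, min_eq_left ((hm _ _ _ _ h1 h2).1 h)]; exact h1
    · rw [min_eq_right h, min_eq_right ((hm _ _ _ _ h2 h1).1 h)]; exact h2
  have hmax : ∀ v v' w w', Rel v v' → Rel w w' → Rel (max v w) (max v' w') := by
    intro v v' w w' h1 h2
    rcases le_total v w with h | h
    · rw [max_eq_right h, max_eq_right ((hm _ _ _ _ h1 h2).1 h)]; exact h2
    · rw [max_eq_left h, max_eq_left ((hm _ _ _ _ h2 h1).1 h)]; exact h1
  induction τ with
  | atom B => by_cases h : (a ∈ B ↔ ¬ d) <;> simp [val, h, hb, ht]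
  | next q => exact hg q
  | or s t h1 h2 =>
    simp only [val]; split_ifs
    · exact hmax _ _ _ _ h1 h2
    · exact hmin _ _ _ _ h1 h2
  | and s t h1 h2 =>
    simp only [val]; split_ifs
    · exact hmin _ _ _ _ h1 h2
    · exact hmax _ _ _ _ h1 h2

end ev

section comb
variable {C : Type*} [Fintype C] (Ψ : ℕ → C → (C → Prop) → Prop) (t x y : ℕ → C → ℕ∞)

theorem fin_bound (f : C → ℕ∞) : ∃ B : ℕ, ∀ p, f p ≠ ⊤ → f p < B := by
  refine ⟨Finset.univ.sup (fun p => (f p).toNat) + 1, fun p hp => ?_⟩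
  lift f p to ℕ using hp with m hm
  have : (f p).toNat ≤ Finset.univ.sup (fun p => (f p).toNat) :=
    Finset.le_sup (f := fun p => (f p).toNat) (Finset.mem_univ p)
  rw [← hm] at this
  simp at this
  exact_mod_cast Nat.lt_succ_of_le this

theorem down_bound (f : C → ℕ∞) (S : C → Prop) (hS : ∀ p, S p → f p ≠ ⊤)
    (hd : ∀ p q, S p → f q ≤ f p → S q) : ∃ B : ℕ, ∀ p, f p < B ↔ S p := by
  refine ⟨(Finset.univ.filter S).sup (fun p => (f p).toNat + 1), fun p => ?_⟩
  constructor
  · intro h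
    have hne : f p ≠ ⊤ := ne_top_of_lt h
    lift f p to ℕ using hne with m hm
    have h' : m < (Finset.univ.filter S).sup (fun p => (f p).toNat + 1) := by exact_mod_cast h
    rw [Finset.lt_sup_iff] at h'
    obtain ⟨q, hq, hmq⟩ := h'
    simp at hq
    refine hd q p hq ?_
    have h3 := hS q hq
    rw [← hm]
    rw [← ENat.natCast_toNat h3]
    exact_mod_cast Nat.lt_succ_iff.1 hmq
  · intro h
    have h3 := hS p h
    rw [← ENat.natCast_toNat h3]
    have : (f p).toNat + 1 ≤ (Finset.univ.filter S).sup (fun p => (f p).toNat + 1) :=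
      Finset.le_sup (f := fun p => (f p).toNat + 1) (by simpa using h)
    exact_mod_cast this

theorem card_image_le_of (F : Finset C) (f g : C → ℕ∞)
    (h : ∀ p ∈ F, ∀ q ∈ F, g p = g q → f p = f q) : (F.image f).card ≤ (F.image g).card := by
  apply Finset.card_le_card_of_surjOn
    (fun v => if h : ∃ p ∈ F, g p = v then f h.choose else 0)
  intro v hv
  simp at hv
  obtain ⟨p, hp, rfl⟩ := hv
  refine ⟨g p, by simpa using ⟨p, hp, rfl⟩, ?_⟩
  have hex : ∃ p' ∈ F, g p' = g p := ⟨p, hp, rfl⟩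
  simp only [dif_pos hex]
  exact h _ hex.choose_spec.1 _ hp hex.choose_spec.2

variable (hΨ : ∀ i q (Z Z' : C → Prop), (∀ p, Z p → Z' p) → Ψ i q Z → Ψ i q Z')
  (ht : ∀ i q (k : ℕ), t i q ≤ k ↔ Ψ i q (fun p => t (i+1) p < k))
  (hy : ∀ i q (k : ℕ), y i q ≤ k ↔ Ψ i q (fun p => x (i+1) p < k))
  (hxy : ∀ i q p, x i q ≤ x i p ↔ y i q ≤ y i p)
  (hxt : ∀ i q, x i q = ⊤ ↔ y i q = ⊤)

include ht hy hxy hxt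

theorem stepB (k : ℕ) : ∀ i, ∃ B : ℕ, ∀ p, x i p < B ↔ t i p < k := by
  induction k with
  | zero => intro i; exact ⟨0, fun p => by simp⟩
  | succ k ih =>
    intro i
    obtain ⟨B, hB⟩ := ih (i+1)
    have key : ∀ p, t i p < (k+1 : ℕ) ↔ y i p ≤ B := by
      intro p
      rw [hy, funext (fun p => propext (hB p)), ← ht]
      push_cast
      exact ENat.lt_natCast_add_one_iff
    apply down_bound
    · intro p hp h
      rw [key, (hxt i p).1 h] at hp
      simp at hp
    · intro p q hp hq
      rw [key] at *
      exact ((hxy _ _ _).1 hq).trans hp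

theorem finB (i : ℕ) : ∃ B : ℕ, (∀ p, x (i+1) p < B ↔ t (i+1) p ≠ ⊤) ∧
    (∀ p, y i p ≤ B ↔ t i p ≠ ⊤) := by
  obtain ⟨k1, h1⟩ := fin_bound (t i)
  obtain ⟨k2, h2⟩ := fin_bound (t (i+1))
  obtain ⟨B, hB⟩ := stepB Ψ t x y ht hy hxy hxt (max k1 k2) (i+1)
  refine ⟨B, fun p => ?_, fun p => ?_⟩
  · rw [hB]
    refine ⟨ne_top_of_lt, fun h => (h2 p h).trans_le ?_⟩
    exact_mod_cast le_max_right _ _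
  · rw [hy, funext (fun p => propext (hB p)), ← ht]
    refine ⟨fun h h' => ?_, fun h => (h1 p h).le.trans ?_⟩
    · rw [h'] at h
      exact absurd (top_le_iff.1 h) (ENat.natCast_ne_top _)
    · exact_mod_cast le_max_left _ _

omit [Fintype C] ht hxy hxt in
theorem y_cases (i : ℕ) (q : C) (h0 : y i q ≠ 0) (h1 : y i q ≠ ⊤) :
    ∃ p, y i q = x (i+1) p + 1 := by
  obtain ⟨m, hm⟩ := ENat.ne_top_iff_exists.1 h1
  rw [← hm] at h0 ⊢
  obtain ⟨j, rfl⟩ := Nat.exists_eq_succ_of_ne_zero (by exact_mod_cast h0 : m ≠ 0)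
  by_contra! hcon
  have h2 := (hy i q (j+1)).1 hm.symm.le
  have : ∀ p, x (i+1) p < ((j+1 : ℕ) : ℕ∞) ↔ x (i+1) p < (j : ℕ) := by
    intro p
    have := hcon p
    push_cast at this ⊢
    rw [ENat.lt_natCast_add_one_iff, le_iff_lt_or_eq]
    refine or_iff_left ?_
    intro h
    rw [h] at this
    exact this rfl
  rw [funext (fun p => propext (this p)), ← hy, ← hm] at h2
  have : j + 1 ≤ j := by exact_mod_cast h2
  omega

theorem fin_iff (hB : ∀ m, ∃ i, m ≤ i ∧ ¬ ∃ q q', x (i+1) q' ≠ ⊤ ∧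
      (∀ p, x (i+1) p ≠ ⊤ → x (i+1) p ≤ x (i+1) q') ∧ y i q = x (i+1) q' + 1) (i : ℕ) (q : C) :
    x i q = ⊤ ↔ t i q = ⊤ := by
  let F : ℕ → Finset C := fun i => Finset.univ.filter (fun q => x i q ≠ ⊤ ∧ t i q = ⊤)
  have hF : ∀ i q, q ∈ F i ↔ (x i q ≠ ⊤ ∧ t i q = ⊤) := by intro i q; simp [F]
  let d : ℕ → ℕ := fun i => ((F i).image (x i)).card
  have hsub : ∀ i, ((F i).image (y i)) ⊆ ((F (i+1)).image (fun p => x (i+1) p + 1)) := by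
    intro i v hv
    obtain ⟨B, hB1, hB2⟩ := finB Ψ t x y ht hy hxy hxt i
    simp only [Finset.mem_image] at hv ⊢
    obtain ⟨q, hq, rfl⟩ := hv
    rw [hF] at hq
    have h1 : y i q ≠ ⊤ := fun h => hq.1 ((hxt i q).2 h)
    have h2 : (B : ℕ∞) < y i q := by
      rw [← not_le, hB2]; simpa using hq.2
    obtain ⟨p, hp⟩ := y_cases Ψ x y hy i q (ne_bot_of_gt h2) h1
    refine ⟨p, ?_, hp.symm⟩
    rw [hF]
    have h3 : x (i+1) p ≠ ⊤ := by
      intro h; rw [h] at hp; exact h1 (by simpa using hp)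
    refine ⟨h3, ?_⟩
    by_contra h4
    have h5 := (hB1 p).2 h4
    rw [hp] at h2
    have := Order.add_one_le_of_lt h5
    exact absurd h2 (not_lt.2 this)
  have hdy : ∀ i, d i ≤ ((F i).image (y i)).card := by
    intro i
    apply card_image_le_of
    intro p _ q _ h
    exact le_antisymm ((hxy i p q).2 h.le) ((hxy i q p).2 h.ge)
  have hdx : ∀ i, ((F (i+1)).image (fun p => x (i+1) p + 1)).card ≤ d (i+1) := by
    intro i
    apply card_image_le_of
    intro p _ q _ h
    simp only [h]
  have hmono : Monotone d := monotone_nat_of_le_succ fun i =>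
    (hdy i).trans ((Finset.card_le_card (hsub i)).trans (hdx i))
  have hle : ∀ i, d i ≤ Fintype.card C := fun i => Finset.card_image_le.trans (Finset.card_le_univ _)
  have hfwd : ∀ i q, t i q ≠ ⊤ → x i q ≠ ⊤ := by
    intro i q h
    obtain ⟨k, hk⟩ := fin_bound (t i)
    obtain ⟨B, hB⟩ := stepB Ψ t x y ht hy hxy hxt k i
    exact ne_top_of_lt ((hB q).2 (hk q h))
  constructor
  · intro h; by_contra h'; exact hfwd i q h' h
  · intro h
    by_contra h'
    have hpos : ∀ j, i ≤ j → (F j).Nonempty := by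
      intro j hj
      have h1 : 0 < d i := Finset.card_pos.2 ⟨x i q, Finset.mem_image_of_mem _ ((hF i q).2 ⟨h', h⟩)⟩
      have h2 := h1.trans_le (hmono hj)
      exact Finset.image_nonempty.1 (Finset.card_pos.1 h2)
    have hstrict : ∀ m, i ≤ m → ∃ j, m ≤ j ∧ d m < d j := by
      intro m hm
      obtain ⟨j, hj, hbad⟩ := hB m
      refine ⟨j+1, by omega, (hmono hj).trans_lt ((hdy j).trans_lt (lt_of_lt_of_le ?_ (hdx j)))⟩
      apply Finset.card_lt_card
      refine ⟨hsub j, fun hsup => hbad ?_⟩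
      obtain ⟨q', hq', hmax⟩ := Finset.exists_max_image (F (j+1)) (x (j+1)) (hpos (j+1) (by omega))
      have h1 := hsup (Finset.mem_image_of_mem (fun p => x (j+1) p + 1) hq')
      obtain ⟨q, hq, he⟩ := Finset.mem_image.1 h1
      rw [hF] at hq'
      refine ⟨q, q', hq'.1, ?_, he⟩
      intro p hp
      by_cases hp' : t (j+1) p = ⊤
      · exact hmax p ((hF _ _).2 ⟨hp, hp'⟩)
      · obtain ⟨B, hB1, hB2⟩ := finB Ψ t x y ht hy hxy hxt j
        have h3 := (hB1 p).2 hp'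
        refine (h3.trans_le ?_).le
        rw [← not_lt, hB1]; simpa using hq'.2
    have hunb : ∀ N, ∃ j, i ≤ j ∧ N ≤ d j := by
      intro N
      induction N with
      | zero => exact ⟨i, le_rfl, Nat.zero_le _⟩
      | succ N ih =>
        obtain ⟨j, hj, hN⟩ := ih
        obtain ⟨j', hj', hlt⟩ := hstrict j hj
        exact ⟨j', hj.trans hj', by omega⟩
    obtain ⟨j, _, hj⟩ := hunb (Fintype.card C + 1)
    have := hle j
    omega

theorem eq_of_eq (k : ℕ) : ∀ i p q, t i p = k → t i q = k → y i p = y i q := by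
  induction k with
  | zero =>
    intro i p q hp hq
    obtain ⟨B, hB⟩ := stepB Ψ t x y ht hy hxy hxt 0 (i+1)
    have : ∀ p, t i p = (0:ℕ) → y i p = 0 := by
      intro p hp
      have h1 := (ht i p 0).1 hp.le
      have h2 : Ψ i p (fun p => x (i+1) p < (0:ℕ)) := by simpa using h1
      have := (hy i p 0).2 h2
      simpa using this
    rw [this p hp, this q hq]
  | succ k ih =>
    intro i
    obtain ⟨B, hB⟩ := stepB Ψ t x y ht hy hxy hxt k (i+1)
    obtain ⟨B', hB'⟩ := stepB Ψ t x y ht hy hxy hxt (k+1) (i+1)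
    have key : ∀ p, t i p = (k+1:ℕ) → ∃ p', y i p = x (i+1) p' + 1 ∧ t (i+1) p' = k := by
      intro p hp
      have h1 : ¬ y i p ≤ B := by
        rw [hy, funext (fun p => propext (hB p)), ← ht, hp, not_le]
        exact_mod_cast Nat.lt_succ_self k
      have h2 : y i p ≤ B' := by
        rw [hy, funext (fun p => propext (hB' p)), ← ht, hp]
      obtain ⟨p', hp'⟩ := y_cases Ψ x y hy i p (ne_bot_of_gt (not_le.1 h1)) (fun h => by simp [h] at h2)
      refine ⟨p', hp', ?_⟩
      rw [hp'] at h1 h2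
      have h3 : x (i+1) p' < B' := by
        have hne : x (i+1) p' ≠ ⊤ := by intro h; rw [h] at h2; simp at h2
        exact (ENat.lt_add_one_iff hne).2 le_rfl |>.trans_le h2
      have h4 : ¬ x (i+1) p' < B := fun h => h1 (Order.add_one_le_of_lt h)
      rw [hB'] at h3
      rw [hB, not_lt] at h4
      push_cast at h3
      exact le_antisymm (ENat.lt_natCast_add_one_iff.1 h3) h4
    intro p q hp hq
    obtain ⟨p', h1, h2⟩ := key p hp
    obtain ⟨q', h3, h4⟩ := key q hq
    have h5 := ih _ _ _ h2 h4
    rw [h1, h3, le_antisymm ((hxy _ _ _).2 h5.le) ((hxy _ _ _).2 h5.ge)]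

theorem order_iff (hfin : ∀ i q, x i q = ⊤ ↔ t i q = ⊤) (i : ℕ) (p q : C) :
    x i p ≤ x i q ↔ t i p ≤ t i q := by
  have h1 : ∀ p q, t i p < t i q → x i p < x i q := by
    intro p q h
    obtain ⟨k, hk⟩ := ENat.ne_top_iff_exists.1 (ne_top_of_lt h)
    obtain ⟨B, hB⟩ := stepB Ψ t x y ht hy hxy hxt (k+1) i
    have h2 := (hB p).2 (by rw [← hk]; exact_mod_cast Nat.lt_succ_self k)
    have h3 : ¬ x i q < B := by
      rw [hB, not_lt]
      rw [← hk] at h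
      exact_mod_cast Order.add_one_le_of_lt h
    exact h2.trans_le (not_lt.1 h3)
  constructor
  · intro h
    by_contra h'
    exact absurd (h1 _ _ (not_le.1 h')) (not_lt.2 h)
  · intro h
    rcases h.lt_or_eq with h | h
    · exact (h1 _ _ h).le
    · by_cases hq : t i q = ⊤
      · rw [(hfin i q).2 hq]; exact le_top
      · obtain ⟨k, hk⟩ := ENat.ne_top_iff_exists.1 hq
        have := eq_of_eq Ψ t x y ht hy hxy hxt k i p q (h.trans hk.symm) hk.symm
        exact (hxy _ _ _).2 this.le

end comb

section main
variable {Q A : Type*} (lv : Q → ℕ) (δ : Q → TCond Q A)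

def low (c : ℕ) (x : Q → ℕ∞) (q : Q) : Prop :=
  lv q < c ∧ (x q ≠ ⊤ ↔ (Odd c ↔ Odd (lv q)))

noncomputable def gg (c : ℕ) (x : Q → ℕ∞) (q : Q) : ℕ∞ :=
  if lv q = c then x q + 1 else if low lv c x q then 0 else ⊤

noncomputable def step (a : A) (x : Q → ℕ∞) (q : Q) : ℕ∞ :=
  val (Odd (lv q)) a (gg lv (lv q) x) (δ q)

theorem gg_le (c : ℕ) (x : Q → ℕ∞) (q : Q) (k : ℕ) :
    gg lv c x q ≤ k ↔ ((lv q = c ∧ x q < k) ∨ low lv c x q) := by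
  unfold gg
  split_ifs with h1 h2
  · have : ¬ low lv c x q := fun h => absurd h1 h.1.ne
    simp only [h1, this, true_and, or_false]
    constructor
    · intro h
      have hne : x q ≠ ⊤ := by intro h'; rw [h'] at h; simp at h
      exact ((ENat.lt_add_one_iff hne).2 le_rfl).trans_le h
    · exact Order.add_one_le_of_lt
  · simp [h2]
  · simp [h1, h2]

theorem step_le (a : A) (x : Q → ℕ∞) (q : Q) (k : ℕ) :
    step lv δ a x q ≤ k ↔
      gs (Odd (lv q)) a (fun q' => (lv q' = lv q ∧ x q' < k) ∨ low lv (lv q) x q') (δ q) := by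
  unfold step
  rw [val_le _ _ _ _ (ENat.natCast_ne_top k)]
  simp only [gg_le]

theorem enat_eq {a b : ℕ∞} (h : ∀ k : ℕ, a ≤ k ↔ b ≤ k) : a = b := by
  apply le_antisymm
  · by_cases hb : b = ⊤
    · rw [hb]; exact le_top
    · obtain ⟨k, rfl⟩ := ENat.ne_top_iff_exists.1 hb
      exact (h k).2 le_rfl
  · by_cases hb : a = ⊤
    · rw [hb]; exact le_top
    · obtain ⟨k, rfl⟩ := ENat.ne_top_iff_exists.1 hb
      exact (h k).1 le_rfl

def fk (u : ℕ → A) (t : ℕ → Q → ℕ∞) : ℕ → ℕ → Q → Prop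
  | 0, i, q => gs (Odd (lv q)) (u i) (fun q' => low lv (lv q) (t (i+1)) q') (δ q)
  | k+1, i, q => gs (Odd (lv q)) (u i)
      (fun q' => (lv q' = lv q ∧ fk u t k (i+1) q') ∨ low lv (lv q) (t (i+1)) q') (δ q)

theorem fk_mono (u : ℕ → A) (t : ℕ → Q → ℕ∞) (k : ℕ) :
    ∀ i q, fk lv δ u t k i q → fk lv δ u t (k+1) i q := by
  induction k with
  | zero => intro i q; exact gs_mono _ _ _ _ _ fun q' _ h => Or.inr h
  | succ k ih =>
    intro i q
    exact gs_mono _ _ _ _ _ fun q' _ h => h.imp (fun h => ⟨h.1, ih _ _ h.2⟩) id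

theorem exists_sol (u : ℕ → A) (c : ℕ) : ∃ t : ℕ → Q → ℕ∞, ∀ i q, lv q < c →
    t i q = step lv δ (u i) (t (i+1)) q := by
  induction c with
  | zero => exact ⟨fun _ _ => 0, fun i q h => absurd h (Nat.not_lt_zero _)⟩
  | succ c ih =>
    obtain ⟨t, ht⟩ := ih
    let t' : ℕ → Q → ℕ∞ := fun i q => if lv q = c then
      (if h : ∃ k, fk lv δ u t k i q then ((Nat.find h : ℕ) : ℕ∞) else ⊤) else t i q
    have h1 : ∀ i q, lv q ≠ c → t' i q = t i q := fun i q h => if_neg h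
    have h2 : ∀ i q (k : ℕ), lv q = c → (t' i q ≤ k ↔ fk lv δ u t k i q) := by
      intro i q k h
      have hm : Monotone (fun k => fk lv δ u t k i q) :=
        monotone_nat_of_le_succ fun k => fk_mono lv δ u t k i q
      simp only [t', if_pos h]
      split_ifs with hex
      · constructor
        · intro hk
          exact hm (show Nat.find hex ≤ k by exact_mod_cast hk) (Nat.find_spec hex)
        · intro hk
          exact_mod_cast Nat.find_min' hex hk
      · constructor
        · intro hk; simp at hk
        · intro hk; exact absurd ⟨k, hk⟩ hex
    have hlow : ∀ c' ≤ c, ∀ i, low lv c' (t' i) = low lv c' (t i) := by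
      intro c' hc' i
      funext q
      by_cases hq : lv q < c'
      · unfold low; rw [h1 i q (by omega)]
      · simp [low, hq]
    refine ⟨t', fun i q hq => ?_⟩
    by_cases hqc : lv q = c
    · apply enat_eq
      intro k
      rw [h2 i q k hqc, step_le, hlow _ hqc.le]
      cases k with
      | zero => simp [fk]
      | succ k =>
        have : ∀ q', (lv q' = lv q ∧ fk lv δ u t k (i+1) q') ↔
            (lv q' = lv q ∧ t' (i+1) q' < (k+1 : ℕ)) := by
          intro q'
          refine and_congr_right fun h => ?_
          rw [← h2 (i+1) q' k (h.trans hqc)]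
          push_cast
          exact ENat.lt_natCast_add_one_iff.symm
        simp only [fk, this]
    · rw [h1 i q hqc, ht i q (by omega)]
      apply enat_eq
      intro k
      rw [step_le, step_le, hlow _ (by omega)]
      have : ∀ q', (lv q' = lv q ∧ t (i+1) q' < k) ↔ (lv q' = lv q ∧ t' (i+1) q' < k) := by
        intro q'
        refine and_congr_right fun h => ?_
        rw [h1 (i+1) q' (by omega)]
      simp only [this]

def Eqv (x x' : Q → ℕ∞) : Prop :=
  (∀ q, x q = ⊤ ↔ x' q = ⊤) ∧ ∀ q q', lv q = lv q' → (x q ≤ x q' ↔ x' q ≤ x' q')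

theorem Eqv.symm {x x' : Q → ℕ∞} (h : Eqv lv x x') : Eqv lv x' x :=
  ⟨fun q => (h.1 q).symm, fun q q' e => (h.2 q q' e).symm⟩

theorem Eqv.trans {x y z : Q → ℕ∞} (h : Eqv lv x y) (h' : Eqv lv y z) : Eqv lv x z :=
  ⟨fun q => (h.1 q).trans (h'.1 q), fun q q' e => (h.2 q q' e).trans (h'.2 q q' e)⟩

def Rl (c : ℕ) (x x' : Q → ℕ∞) (v v' : ℕ∞) : Prop :=
  (v = 0 ∧ v' = 0) ∨ (v = ⊤ ∧ v' = ⊤) ∨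
    ∃ q, lv q = c ∧ x q ≠ ⊤ ∧ x' q ≠ ⊤ ∧ v = x q + 1 ∧ v' = x' q + 1

theorem Rl_mono {x x' : Q → ℕ∞} (h : Eqv lv x x') (c : ℕ) (v v' w w' : ℕ∞)
    (h1 : Rl lv c x x' v v') (h2 : Rl lv c x x' w w') : v ≤ w ↔ v' ≤ w' := by
  have a1 : ∀ z : ℕ∞, ¬ z + 1 ≤ 0 := by intro z; simp
  have a2 : ∀ z : ℕ∞, z ≠ ⊤ → ¬ ⊤ ≤ z + 1 := by
    intro z hz h; apply hz; simpa using h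
  rcases h1 with ⟨rfl, rfl⟩ | ⟨rfl, rfl⟩ | ⟨q, hq, hx, hx', rfl, rfl⟩ <;>
  rcases h2 with ⟨rfl, rfl⟩ | ⟨rfl, rfl⟩ | ⟨p, hp, hz, hz', rfl, rfl⟩ <;>
  try simp
  · simp [hz, hz']
  · exact h.2 q p (hq.trans hp.symm)

theorem step_Rl {x x' : Q → ℕ∞} (h : Eqv lv x x') (a : A) (q : Q) :
    Rl lv (lv q) x x' (step lv δ a x q) (step lv δ a x' q) := by
  unfold step
  apply val_rel (Rel := Rl lv (lv q) x x')
  · exact Or.inl ⟨rfl, rfl⟩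
  · exact Or.inr (Or.inl ⟨rfl, rfl⟩)
  · exact Rl_mono lv h _
  · intro p
    have hl : low lv (lv q) x p ↔ low lv (lv q) x' p := by
      simp only [low, ne_eq, h.1 p]
    unfold gg
    by_cases h1 : lv p = lv q
    · simp only [h1, if_true]
      by_cases h2 : x p = ⊤
      · rw [h2, (h.1 p).1 h2]; exact Or.inr (Or.inl (by simp))
      · exact Or.inr (Or.inr ⟨p, h1, h2, fun h3 => h2 ((h.1 p).2 h3), rfl, rfl⟩)
    · by_cases h2 : low lv (lv q) x p
      · simp only [h1, h2, hl.1 h2, if_true, if_false]; exact Or.inl ⟨rfl, rfl⟩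
      · have h3 : ¬ low lv (lv q) x' p := fun h' => h2 (hl.2 h')
        simp only [h1, h2, h3, if_false]; exact Or.inr (Or.inl ⟨rfl, rfl⟩)

theorem step_eqv {x x' : Q → ℕ∞} (h : Eqv lv x x') (a : A) :
    Eqv lv (step lv δ a x) (step lv δ a x') := by
  refine ⟨fun q => ?_, fun q q' e => ?_⟩
  · have h1 := step_Rl lv δ h a q
    have h2 : Rl lv (lv q) x x' ⊤ ⊤ := Or.inr (Or.inl ⟨rfl, rfl⟩)
    rw [← top_le_iff, ← top_le_iff]
    exact Rl_mono lv h _ _ _ _ _ h2 h1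
  · have h1 := step_Rl lv δ h a q
    have h2 := step_Rl lv δ h a q'
    rw [← e] at h2
    exact Rl_mono lv h _ _ _ _ _ h1 h2

def Bad (j : ℕ) (a : A) (x : Q → ℕ∞) : Prop :=
  ∃ q q', lv q = j ∧ lv q' = j ∧ x q' ≠ ⊤ ∧ (∀ p, lv p = j → x p ≠ ⊤ → x p ≤ x q') ∧
    step lv δ a x q = x q' + 1

theorem bad_eqv {x x' : Q → ℕ∞} (h : Eqv lv x x') (j : ℕ) (a : A) (hb : Bad lv δ j a x) :
    Bad lv δ j a x' := by
  obtain ⟨q, q', hq, hq', h1, h2, h3⟩ := hb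
  have h1' : x' q' ≠ ⊤ := fun h' => h1 ((h.1 q').2 h')
  refine ⟨q, q', hq, hq', h1', ?_, ?_⟩
  · intro p hp hpt
    exact (h.2 p q' (hp.trans hq'.symm)).1 (h2 p hp fun h' => hpt ((h.1 p).1 h'))
  · have e1 := step_Rl lv δ h a q
    have e2 : Rl lv (lv q) x x' (x q' + 1) (x' q' + 1) :=
      Or.inr (Or.inr ⟨q', hq'.trans hq.symm, h1, h1', rfl, rfl⟩)
    exact le_antisymm ((Rl_mono lv h _ _ _ _ _ e1 e2).1 h3.le) ((Rl_mono lv h _ _ _ _ _ e2 e1).1 h3.ge)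

theorem sol_final (u : ℕ → A) (t : ℕ → Q → ℕ∞) (ht : ∀ i q, t i q = step lv δ (u i) (t (i+1)) q)
    (j m : ℕ) : ∃ i, m ≤ i ∧ ¬ Bad lv δ j (u i) (t (i+1)) := by
  by_contra! hcon
  have hcon' := fun n => hcon (m+n) (by omega)
  choose q q' hq hq' h1 h2 h3 using hcon'
  refine not_strictAnti_of_wellFoundedLT (fun n => t (m+n+1) (q' n)) (strictAnti_nat_of_succ_lt ?_)
  intro n
  have e := h3 (n+1)
  rw [← ht] at e
  have hne := h1 (n+1)
  have hne2 : t (m+(n+1)) (q (n+1)) ≠ ⊤ := by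
    rw [e]; intro h; apply hne; simpa using h
  have := h2 n (q (n+1)) (hq _) hne2
  refine lt_of_lt_of_le ?_ this
  change _ < t (m+(n+1)) _
  rw [e]
  exact (ENat.lt_add_one_iff hne).2 le_rfl


theorem run_eqv [Fintype Q] (u : ℕ → A) (t x : ℕ → Q → ℕ∞)
    (ht : ∀ i q, t i q = step lv δ (u i) (t (i+1)) q)
    (hx : ∀ i, Eqv lv (x i) (step lv δ (u i) (x (i+1))))
    (hB : ∀ j m, ∃ i, m ≤ i ∧ ¬ Bad lv δ j (u i) (x (i+1))) (i : ℕ) : Eqv lv (x i) (t i) := by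
  have key : ∀ c, (∀ i q, lv q < c → (x i q = ⊤ ↔ t i q = ⊤)) →
      (∀ i q, lv q = c → (x i q = ⊤ ↔ t i q = ⊤)) ∧
      (∀ i q q', lv q = c → lv q' = c → (x i q ≤ x i q' ↔ t i q ≤ t i q')) := by
    intro c hc
    have hlow : ∀ i, low lv c (x i) = low lv c (t i) := by
      intro i
      funext q
      by_cases hq : lv q < c
      · unfold low; rw [ne_eq, hc i q hq]
      · simp [low, hq]
    let Ψ : ℕ → {q // lv q = c} → ({q // lv q = c} → Prop) → Prop := fun i q Z =>
      gs (Odd c) (u i) (fun q' => (∃ h : lv q' = c, Z ⟨q', h⟩) ∨ low lv c (t (i+1)) q') (δ q)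
    have h1 : ∀ i (q : {q // lv q = c}) (k : ℕ), t i q ≤ k ↔ Ψ i q (fun p => t (i+1) p < k) := by
      rintro i ⟨q, rfl⟩ k
      simp only [Ψ, exists_prop]
      rw [ht, step_le]
    have h2 : ∀ i (q : {q // lv q = c}) (k : ℕ), step lv δ (u i) (x (i+1)) q ≤ k ↔
        Ψ i q (fun p => x (i+1) p < k) := by
      rintro i ⟨q, rfl⟩ k
      simp only [Ψ, exists_prop]
      rw [step_le, hlow]
    have h3 : ∀ i (q : {q // lv q = c}) (p : {q // lv q = c}), x i q ≤ x i p ↔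
        step lv δ (u i) (x (i+1)) q ≤ step lv δ (u i) (x (i+1)) p :=
      fun i q p => (hx i).2 q p (q.2.trans p.2.symm)
    have h4 : ∀ i (q : {q // lv q = c}), x i q = ⊤ ↔ step lv δ (u i) (x (i+1)) q = ⊤ :=
      fun i q => (hx i).1 q
    have h5 := fin_iff Ψ (fun i q => t i q) (fun i q => x i q)
      (fun i q => step lv δ (u i) (x (i+1)) q) h1 h2 h3 h4 (by
        intro m
        obtain ⟨i, hi, hb⟩ := hB c m
        refine ⟨i, hi, ?_⟩
        rintro ⟨q, q', e1, e2, e3⟩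
        exact hb ⟨q, q', q.2, q'.2, e1, fun p hp => e2 ⟨p, hp⟩, e3⟩)
    have h6 := order_iff Ψ (fun i q => t i q) (fun i q => x i q)
      (fun i q => step lv δ (u i) (x (i+1)) q) h1 h2 h3 h4 h5
    exact ⟨fun i q hq => h5 i ⟨q, hq⟩, fun i q q' hq hq' => h6 i ⟨q, hq⟩ ⟨q', hq'⟩⟩
  have hall : ∀ c, ∀ i q, lv q < c → (x i q = ⊤ ↔ t i q = ⊤) := by
    intro c
    induction c with
    | zero => intro i q h; omega
    | succ c ih =>
      intro i q h
      rcases Nat.lt_succ_iff_lt_or_eq.1 h with h | h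
      · exact ih i q h
      · exact (key c ih).1 i q h
  exact ⟨fun q => hall _ i q (Nat.lt_succ_self _), fun q q' e => (key (lv q) (hall _)).2 i q q' rfl e.symm⟩

noncomputable def pt (d : Prop) (x : Q → ℕ∞) (q : Q) : WithTop (ℕ ×ₗ ℕ) :=
  if ((x q ≠ ⊤ ↔ ¬ Odd (lv q)) ↔ ¬ d) then
    ((toLex (lv q, if (Odd (lv q) ↔ d) then (x q).toNat + 1 else 0) : ℕ ×ₗ ℕ) : WithTop (ℕ ×ₗ ℕ))
  else ⊤

theorem pt_state (hlv : ∀ q q', (δ q).NextOccurs q' → lv q' ≤ lv q) (d : Prop) (a : A)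
    (x : Q → ℕ∞) (q : Q) (h : pt lv d (step lv δ a x) q ≠ ⊤) :
    val d a (pt lv d x) (δ q) ≤ pt lv d (step lv δ a x) q ∧
    ((Odd (lv q) ↔ d) → val d a (pt lv d x) (δ q) < pt lv d (step lv δ a x) q) := by
  have hc : ((step lv δ a x q ≠ ⊤ ↔ ¬ Odd (lv q)) ↔ ¬ d) := by
    by_contra hc; exact h (if_neg hc)
  by_cases hd : Odd (lv q) ↔ d
  · have hlt : val d a (pt lv d x) (δ q) < pt lv d (step lv δ a x) q := by
      have hne : step lv δ a x q ≠ ⊤ := by tauto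
      obtain ⟨k, hk⟩ := ENat.ne_top_iff_exists.1 hne
      have e : pt lv d (step lv δ a x) q =
          ((toLex (lv q, k + 1) : ℕ ×ₗ ℕ) : WithTop (ℕ ×ₗ ℕ)) := by
        unfold pt; rw [if_pos hc, if_pos hd, ← hk]; simp
      rw [e, val_lt]
      · have h1 := (step_le lv δ a x q k).1 hk.symm.le
        rw [propext hd] at h1
        refine gs_mono _ _ _ _ _ ?_ h1
        rintro q' hq' (⟨h2, h3⟩ | h2)
        · have hne' : x q' ≠ ⊤ := ne_top_of_lt h3
          have hc' : ((x q' ≠ ⊤ ↔ ¬ Odd (lv q')) ↔ ¬ d) := by rw [h2]; tauto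
          have hd' : Odd (lv q') ↔ d := by rw [h2]; exact hd
          unfold pt; rw [if_pos hc', if_pos hd', h2]
          obtain ⟨k', hk'⟩ := ENat.ne_top_iff_exists.1 hne'
          rw [← hk'] at h3 ⊢
          rw [WithTop.coe_lt_coe, Prod.Lex.toLex_lt_toLex]
          right
          have : k' < k := by exact_mod_cast h3
          simpa using this
        · have hc' : ((x q' ≠ ⊤ ↔ ¬ Odd (lv q')) ↔ ¬ d) := by
            have := h2.2; tauto
          unfold pt; rw [if_pos hc']
          rw [WithTop.coe_lt_coe, Prod.Lex.toLex_lt_toLex]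
          exact Or.inl h2.1
      · rw [bot_lt_iff_ne_bot]
        intro h
        have : (toLex (lv q, k+1) : ℕ ×ₗ ℕ) = toLex (0, 0) := WithTop.coe_injective h
        simp at this
    exact ⟨hlt.le, fun _ => hlt⟩
  · refine ⟨?_, fun h => absurd h hd⟩
    have htop : step lv δ a x q = ⊤ := by tauto
    have e : pt lv d (step lv δ a x) q =
          ((toLex (lv q, 0) : ℕ ×ₗ ℕ) : WithTop (ℕ ×ₗ ℕ)) := by
        unfold pt; rw [if_pos hc, if_neg hd]
    rw [e, val_le _ _ _ _ (WithTop.coe_ne_top)]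
    have h1 : ¬ step lv δ a x q < ⊤ := by rw [htop]; exact lt_irrefl _
    unfold step at h1
    rw [val_lt _ _ _ _ (by simp), gs_not] at h1
    have hd2 : (¬ Odd (lv q)) ↔ d := by tauto
    rw [propext hd2] at h1
    refine gs_mono _ _ _ _ _ ?_ h1
    intro q' hq' h2
    have h3 : gg lv (lv q) x q' = ⊤ := by simpa using h2
    unfold gg at h3
    rcases (hlv q q' hq').lt_or_eq with hl | hl
    · rw [if_neg hl.ne] at h3
      have h4 : ¬ low lv (lv q) x q' := by
        intro h; rw [if_pos h] at h3; simp at h3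
      have h5 : ¬ (x q' ≠ ⊤ ↔ (Odd (lv q) ↔ Odd (lv q'))) := fun h => h4 ⟨hl, h⟩
      have hc' : ((x q' ≠ ⊤ ↔ ¬ Odd (lv q')) ↔ ¬ d) := by tauto
      unfold pt; rw [if_pos hc']
      rw [WithTop.coe_le_coe, Prod.Lex.toLex_le_toLex]
      exact Or.inl hl
    · rw [if_pos hl] at h3
      have h4 : x q' = ⊤ := by simpa using h3
      have hc' : ((x q' ≠ ⊤ ↔ ¬ Odd (lv q')) ↔ ¬ d) := by rw [hl]; tauto
      have hd' : ¬ (Odd (lv q') ↔ d) := by rw [hl]; exact hd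
      unfold pt; rw [if_pos hc', if_neg hd', hl]

theorem no_inf {α : Type*} [LinearOrder α] [WellFoundedLT α] (f : ℕ → α) (hf : ∀ n, f (n+1) ≤ f n) :
    ∃ m, ∀ n, m ≤ n → ¬ f (n+1) < f n := by
  have hanti : Antitone f := antitone_nat_of_succ_le hf
  obtain ⟨v, ⟨m, rfl⟩, H⟩ := (wellFounded_lt (α := α)).has_min _ (Set.range_nonempty f)
  refine ⟨m, fun n hn h => H _ (Set.mem_range_self (n+1)) (h.trans_le (hanti hn))⟩

theorem subf_or {χ₀ χ₁ τ : TCond Q A} (h : TCond.Subf (.or χ₀ χ₁) τ) :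
    TCond.Subf χ₀ τ ∧ TCond.Subf χ₁ τ := by
  induction h with
  | refl => exact ⟨.orL (.refl _), .orR (.refl _)⟩
  | orL _ ih => exact ⟨.orL ih.1, .orL ih.2⟩
  | orR _ ih => exact ⟨.orR ih.1, .orR ih.2⟩
  | andL _ ih => exact ⟨.andL ih.1, .andL ih.2⟩
  | andR _ ih => exact ⟨.andR ih.1, .andR ih.2⟩

theorem subf_and {χ₀ χ₁ τ : TCond Q A} (h : TCond.Subf (.and χ₀ χ₁) τ) :
    TCond.Subf χ₀ τ ∧ TCond.Subf χ₁ τ := by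
  induction h with
  | refl => exact ⟨.andL (.refl _), .andR (.refl _)⟩
  | orL _ ih => exact ⟨.orL ih.1, .orL ih.2⟩
  | orR _ ih => exact ⟨.orR ih.1, .orR ih.2⟩
  | andL _ ih => exact ⟨.andL ih.1, .andL ih.2⟩
  | andR _ ih => exact ⟨.andR ih.1, .andR ih.2⟩

noncomputable def vp (u : ℕ → A) (t : ℕ → Q → ℕ∞) (d : Prop) : WAA.Vert Q A → WithTop (ℕ ×ₗ ℕ)
  | (i, .inl q) => pt lv d (t i) q
  | (i, .inr τ) => val d (u i) (pt lv d (t (i+1))) τ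

def St : WAA.Vert Q A → WAA.Vert Q A → Prop
  | (i, .inl q), w => w = (i, .inr (δ q))
  | (i, .inr (.next q)), w => w = (i+1, .inl q)
  | (i, .inr (.or s t)), w => w = (i, .inr s) ∨ w = (i, .inr t)
  | (i, .inr (.and s t)), w => w = (i, .inr s) ∨ w = (i, .inr t)
  | (_, .inr (.atom _)), _ => False

section acc
variable (M : WAA Q A) (hlv : ∀ q q', (M.δ q).NextOccurs q' → lv q' ≤ lv q)
  (hR : ∀ q, q ∈ M.recurring ↔ Odd (lv q))
  (u : ℕ → A) (t : ℕ → Q → ℕ∞) (ht : ∀ i q, t i q = step lv M.δ (u i) (t (i+1)) q)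

include hlv ht in
theorem vp_state (d : Prop) (i : ℕ) (q : Q) (h : vp lv u t d (i, .inl q) ≠ ⊤) :
    vp lv u t d (i, .inr (M.δ q)) ≤ vp lv u t d (i, .inl q) ∧
    ((Odd (lv q) ↔ d) → vp lv u t d (i, .inr (M.δ q)) < vp lv u t d (i, .inl q)) := by
  have e : t i = step lv M.δ (u i) (t (i+1)) := funext (ht i)
  simp only [vp] at h ⊢
  rw [e] at h ⊢
  exact pt_state lv M.δ hlv d (u i) (t (i+1)) q h

include hlv hR ht in
theorem acc_of (i : ℕ) (q : Q) (h : t i q ≠ ⊤ ↔ ¬ Odd (lv q)) : M.AcceptsFrom u i q := by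
  let f := vp lv u t False
  let V : Set (WAA.Vert Q A) := {w | f w ≠ ⊤ ∧ ∀ τ, w.2 = Sum.inr τ → ∃ q, TCond.Subf τ (M.δ q)}
  let E : WAA.Vert Q A → WAA.Vert Q A → Prop := fun v w => v ∈ V ∧ w ∈ V ∧ St M.δ v w ∧ f w ≤ f v
  have mkE : ∀ v w, v ∈ V → St M.δ v w → f w ≤ f v →
      (∀ τ, w.2 = Sum.inr τ → ∃ q, TCond.Subf τ (M.δ q)) → E v w := fun v w hv hs hf hw =>
    ⟨hv, ⟨ne_top_of_le_ne_top hv.1 hf, hw⟩, hs, hf⟩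
  let G : WAA.RunGraph M u :=
    { V := V
      E := E
      edge_mem := fun v w h => ⟨h.1, h.2.1⟩
      cond_subf := fun i τ h => h.2 τ rfl
      state_succ := by
        intro i q hV w
        refine ⟨fun h => h.2.2.1, ?_⟩
        rintro rfl
        refine mkE _ _ hV rfl (vp_state lv M hlv u t ht False i q hV.1).1 ?_
        rintro τ hτ
        cases hτ
        exact ⟨q, .refl _⟩
      next_succ := by
        intro i q hV w
        refine ⟨fun h => h.2.2.1, ?_⟩
        rintro rfl
        refine mkE _ _ hV rfl le_rfl ?_
        rintro τ hτ
        cases hτ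
      or_succ_subset := fun i s r hV w h => h.2.2.1
      or_succ_exists := by
        intro i s r hV
        obtain ⟨q, hq⟩ := hV.2 _ rfl
        have e : f (i, .inr (.or s r)) = min (f (i, .inr s)) (f (i, .inr r)) := by
          simp [f, vp, val]
        rcases min_choice (f (i, .inr s)) (f (i, .inr r)) with h | h
        · refine ⟨(i, .inr s), mkE _ _ hV (Or.inl rfl) (by rw [e, h]) ?_⟩
          rintro τ hτ
          cases hτ
          exact ⟨q, (subf_or hq).1⟩
        · refine ⟨(i, .inr r), mkE _ _ hV (Or.inr rfl) (by rw [e, h]) ?_⟩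
          rintro τ hτ
          cases hτ
          exact ⟨q, (subf_or hq).2⟩
      and_succ := by
        intro i s r hV w
        refine ⟨fun h => h.2.2.1, ?_⟩
        obtain ⟨q, hq⟩ := hV.2 _ rfl
        have e : f (i, .inr (.and s r)) = max (f (i, .inr s)) (f (i, .inr r)) := by
          simp [f, vp, val]
        rintro (rfl | rfl)
        · refine mkE _ _ hV (Or.inl rfl) (by rw [e]; exact le_max_left _ _) ?_
          rintro τ hτ
          cases hτ
          exact ⟨q, (subf_and hq).1⟩
        · refine mkE _ _ hV (Or.inr rfl) (by rw [e]; exact le_max_right _ _) ?_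
          rintro τ hτ
          cases hτ
          exact ⟨q, (subf_and hq).2⟩
      atom_succ := fun i B w h => h.2.2.1
      atom_ok := by
        intro i B hV
        by_contra hB
        apply hV.1
        simp [f, vp, val, hB] }
  refine ⟨G, ?_, ?_⟩
  · intro p hp q hq
    obtain ⟨m, hm⟩ := no_inf (fun n => f (p n)) (fun n => (hp n).2.2.2)
    obtain ⟨n, hn, hpn⟩ := hq m
    by_contra hN
    rw [hR] at hN
    apply hm n hn
    have hE := hp n
    obtain ⟨i, s⟩ : ∃ i, p n = (i, .inl q) := ⟨(p n).1, Prod.ext rfl hpn⟩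
    rw [s] at hE ⊢
    have hs : p (n+1) = _ := hE.2.2.1
    rw [hs]
    exact (vp_state lv M hlv u t ht False i q hE.1.1).2 (by simpa using hN)
  · refine ⟨?_, ?_⟩
    · simp only [f, vp, pt]
      rw [if_pos (by tauto)]
      exact WithTop.coe_ne_top
    · rintro τ hτ
      cases hτ

include hlv hR ht in
theorem of_acc [Fintype Q] (i : ℕ) (q : Q) (h : M.AcceptsFrom u i q) :
    t i q ≠ ⊤ ↔ ¬ Odd (lv q) := by
  obtain ⟨G, hG, hV⟩ := h
  by_contra hcon
  let f := vp lv u t True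
  have hstep : ∀ v, v ∈ G.V → f v ≠ ⊤ → ∃ w, G.E v w ∧ f w ≤ f v := by
    rintro ⟨i, q | τ⟩ hv hf
    · exact ⟨_, (G.state_succ i q hv _).2 rfl, (vp_state lv M hlv u t ht True i q hf).1⟩
    · cases τ with
      | atom B =>
        exfalso
        apply hf
        have := G.atom_ok i B hv
        simp [f, vp, val, this]
      | next q => exact ⟨_, (G.next_succ i q hv _).2 rfl, le_rfl⟩
      | or s r =>
        obtain ⟨w, hw⟩ := G.or_succ_exists i s r hv
        have e : f (i, .inr (.or s r)) = max (f (i, .inr s)) (f (i, .inr r)) := by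
          simp [f, vp, val]
        refine ⟨w, hw, ?_⟩
        rw [e]
        rcases G.or_succ_subset i s r hv w hw with rfl | rfl
        · exact le_max_left _ _
        · exact le_max_right _ _
      | and s r =>
        have e : f (i, .inr (.and s r)) = min (f (i, .inr s)) (f (i, .inr r)) := by
          simp [f, vp, val]
        rcases min_choice (f (i, .inr s)) (f (i, .inr r)) with h | h
        · exact ⟨_, (G.and_succ i s r hv _).2 (Or.inl rfl), by rw [e, h]⟩
        · exact ⟨_, (G.and_succ i s r hv _).2 (Or.inr rfl), by rw [e, h]⟩
  have hstep' : ∀ v : {v // v ∈ G.V ∧ f v ≠ ⊤}, ∃ w : {v // v ∈ G.V ∧ f v ≠ ⊤},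
      G.E v w ∧ f w ≤ f v := by
    rintro ⟨v, hv, hf⟩
    obtain ⟨w, hw, hle⟩ := hstep v hv hf
    exact ⟨⟨w, (G.edge_mem hw).2, ne_top_of_le_ne_top hf hle⟩, hw, hle⟩
  choose nx hnx1 hnx2 using hstep'
  have h0 : f (i, .inl q) ≠ ⊤ := by
    simp only [f, vp, pt]
    rw [if_pos (by tauto)]
    exact WithTop.coe_ne_top
  let P : ℕ → {v // v ∈ G.V ∧ f v ≠ ⊤} := fun n => nx^[n] ⟨_, hV, h0⟩
  have hP : ∀ n, P (n+1) = nx (P n) := fun n => Function.iterate_succ_apply' _ _ _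
  let p : ℕ → WAA.Vert Q A := fun n => P n
  have hpE : ∀ n, G.E (p n) (p (n+1)) := by
    intro n; simp only [p]; rw [hP]; exact hnx1 _
  have hpf : ∀ n, f (p (n+1)) ≤ f (p n) := by
    intro n; simp only [p]; rw [hP]; exact hnx2 _
  have hpV : ∀ n, p n ∈ G.V := fun n => (P n).2.1
  obtain ⟨m, hm⟩ := no_inf (fun n => f (p n)) hpf
  have hst : ∀ (τ : TCond Q A) (i n : ℕ), p n = (i, .inr τ) → ∃ n', n ≤ n' ∧ ∃ q, (p n').2 = .inl q := by
    intro τ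
    induction τ with
    | atom B => intro i n h; have := hpE n; rw [h] at this; exact absurd this (G.atom_succ i B _)
    | next q =>
      intro i n h
      have h1 := hpE n
      have h2 := hpV n
      rw [h] at h1 h2
      have := (G.next_succ i q h2 _).1 h1
      exact ⟨n+1, by omega, q, by rw [this]⟩
    | or s r ih1 ih2 =>
      intro i n h
      have h1 := hpE n
      have h2 := hpV n
      rw [h] at h1 h2
      rcases G.or_succ_subset i s r h2 _ h1 with h3 | h3
      · obtain ⟨n', h4, h5⟩ := ih1 _ _ h3
        exact ⟨n', by omega, h5⟩
      · obtain ⟨n', h4, h5⟩ := ih2 _ _ h3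
        exact ⟨n', by omega, h5⟩
    | and s r ih1 ih2 =>
      intro i n h
      have h1 := hpE n
      have h2 := hpV n
      rw [h] at h1 h2
      rcases (G.and_succ i s r h2 _).1 h1 with h3 | h3
      · obtain ⟨n', h4, h5⟩ := ih1 _ _ h3
        exact ⟨n', by omega, h5⟩
      · obtain ⟨n', h4, h5⟩ := ih2 _ _ h3
        exact ⟨n', by omega, h5⟩
  have hst' : ∀ n, ∃ n', n ≤ n' ∧ ∃ q, (p n').2 = .inl q := by
    intro n
    rcases hx : p n with ⟨i, q | τ⟩
    · exact ⟨n, le_rfl, q, by rw [hx]⟩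
    · exact hst τ i n hx
  have hinf : ∃ q, ∀ m, ∃ n, m ≤ n ∧ (p n).2 = Sum.inl q := by
    by_contra! hno
    choose b hb using hno
    obtain ⟨n', h1, q, h2⟩ := hst' (Finset.univ.sup b)
    exact hb q n' ((Finset.le_sup (Finset.mem_univ q)).trans h1) h2
  obtain ⟨q, hq⟩ := hinf
  have hrec := hG p hpE q hq
  rw [hR] at hrec
  obtain ⟨n, hn, hpn⟩ := hq m
  apply hm n hn
  have hE := hpE n
  have hVn := hpV n
  have hfn : f (p n) ≠ ⊤ := (P n).2.2
  obtain ⟨i, s⟩ : ∃ i, p n = (i, .inl q) := ⟨(p n).1, Prod.ext rfl hpn⟩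
  rw [s] at hE hVn hfn
  simp only [s]
  have hs := (G.state_succ i q hVn _).1 hE
  rw [hs]
  exact (vp_state lv M hlv u t ht True i q hfn).2 (by simpa using hrec)

end acc

section ranks
variable [Fintype Q]

noncomputable def emb (r : Fin (Fintype.card Q) → Fin (Fintype.card Q + 1)) (q : Q) : ℕ∞ :=
  if r (Fintype.equivFin Q q) = Fin.last _ then ⊤ else ((r (Fintype.equivFin Q q) : ℕ) : ℕ∞)

noncomputable def rset (x : Q → ℕ∞) (q : Q) : Finset Q :=
  Finset.univ.filter (fun p => lv p = lv q ∧ x p < x q)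

theorem rset_card (x : Q → ℕ∞) (q : Q) : (rset lv x q).card < Fintype.card Q :=
  Finset.card_lt_univ_of_notMem (x := q) (by simp [rset])

noncomputable def rk (x : Q → ℕ∞) (j : Fin (Fintype.card Q)) : Fin (Fintype.card Q + 1) :=
  if x ((Fintype.equivFin Q).symm j) = ⊤ then Fin.last _
  else ⟨(rset lv x ((Fintype.equivFin Q).symm j)).card, (rset_card lv x _).trans (Nat.lt_succ_self _)⟩

theorem rk_congr {x x' : Q → ℕ∞} (h : Eqv lv x x') : rk lv x = rk lv x' := by
  funext j
  unfold rk
  have : ∀ q, rset lv x q = rset lv x' q := by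
    intro q
    ext p
    simp only [rset, Finset.mem_filter, Finset.mem_univ, true_and]
    refine and_congr_right fun e => ?_
    rw [← not_le, ← not_le, h.2 q p e.symm]
  simp only [this, h.1]

theorem emb_rk_apply (x : Q → ℕ∞) (q : Q) :
    emb (rk lv x) q = if x q = ⊤ then ⊤ else ((rset lv x q).card : ℕ∞) := by
  unfold emb rk
  simp only [Equiv.symm_apply_apply]
  by_cases h : x q = ⊤
  · simp [h]
  · simp only [h, if_false]
    rw [if_neg]
    intro h'
    have := congrArg Fin.val h'
    simp at this
    have h2 := rset_card lv x q
    omega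

theorem emb_rk (x : Q → ℕ∞) : Eqv lv x (emb (rk lv x)) := by
  refine ⟨fun q => ?_, fun q q' e => ?_⟩
  · rw [emb_rk_apply]; split_ifs with h <;> simp [h]
  · rw [emb_rk_apply, emb_rk_apply]
    by_cases h' : x q' = ⊤
    · simp [h']
    by_cases h : x q = ⊤
    · simp [h, h']
    simp only [h, h', if_false, Nat.cast_le]
    constructor
    · intro hle
      apply Finset.card_le_card
      intro p hp
      simp only [rset, Finset.mem_filter, Finset.mem_univ, true_and] at hp ⊢
      exact ⟨hp.1.trans e, hp.2.trans_le hle⟩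
    · intro hle
      by_contra hlt
      rw [not_le] at hlt
      apply absurd hle
      rw [not_le]
      apply Finset.card_lt_card
      refine ⟨?_, fun hs => ?_⟩
      · intro p hp
        simp only [rset, Finset.mem_filter, Finset.mem_univ, true_and] at hp ⊢
        exact ⟨hp.1.trans e.symm, hp.2.trans hlt⟩
      · have : q' ∈ rset lv x q := by simp [rset, e, hlt]
        have := hs this
        simp [rset] at this

end ranks

theorem exists_lv [Fintype Q] (M : WAA Q A) : ∃ lv : Q → ℕ,
    (∀ q q', (M.δ q).NextOccurs q' → lv q' ≤ lv q) ∧ (∀ q, q ∈ M.recurring ↔ Odd (lv q)) ∧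
    ∃ K, ∀ q, lv q < K := by
  let Rch : Q → Finset Q := fun q =>
    Finset.univ.filter (fun q' => Relation.ReflTransGen (fun x y => (M.δ x).NextOccurs y) q q')
  let lv : Q → ℕ := fun q => 2 * (Rch q).card + (if q ∈ M.recurring then 1 else 0)
  refine ⟨lv, ?_, ?_, Finset.univ.sup lv + 1, fun q =>
    Nat.lt_succ_of_le (Finset.le_sup (f := lv) (Finset.mem_univ q))⟩
  · intro q q' hq
    have hsub : Rch q' ⊆ Rch q := by
      intro p hp
      simp only [Rch, Finset.mem_filter, Finset.mem_univ, true_and] at hp ⊢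
      exact Relation.ReflTransGen.head hq hp
    rcases (Finset.card_le_card hsub).lt_or_eq with h | h
    · simp only [lv]; split_ifs <;> omega
    · have he := Finset.eq_of_subset_of_card_le hsub h.ge
      have hmem : q ∈ Rch q' := by
        rw [he]; simp [Rch, Relation.ReflTransGen.refl]
      simp only [Rch, Finset.mem_filter, Finset.mem_univ, true_and] at hmem
      have := M.weak q q' (Relation.ReflTransGen.single hq) hmem
      simp only [lv, h, this]; exact le_rfl
  · intro q
    by_cases h : q ∈ M.recurring
    · simp [lv, h]
    · simp [lv, h]

end main
end BD

/-- for every weak alternating automaton `M` with `n` states and set `I`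
of initial states there is a backward deterministic automaton with a generalized
transition Büchi condition and at most `(n+1)^n` states which, augmented with a suitable
set `I'` of initial states, recognizes the same ω-language
`{u | some q ∈ I accepts u[0,ω)}`. -/
theorem weak_alternating_to_backward_deterministic_language {Q A : Type*} [Fintype Q]
    (M : WAA Q A) (I : Set Q) :
    ∃ (P : Type) (_ : Fintype P) (ρ : A → P → P) (k : ℕ)
      (T : Fin k → Set (P × A × P)) (I' : Set P),
      Fintype.card P ≤ (Fintype.card Q + 1) ^ Fintype.card Q ∧
      (∀ u : ℕ → A, ∃! r : ℕ → P, IsBackRun ρ u r ∧ GTBFinal T u r) ∧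
      (∀ (u : ℕ → A) (r : ℕ → P), IsBackRun ρ u r → GTBFinal T u r →
        (r 0 ∈ I' ↔ ∃ q ∈ I, WAA.AcceptsFrom M u 0 q)) := by
  obtain ⟨lv, hlv, hR, K, hK⟩ := BD.exists_lv M
  let P := Fin (Fintype.card Q) → Fin (Fintype.card Q + 1)
  let ρ : A → P → P := fun a r => BD.rk lv (BD.step lv M.δ a (BD.emb r))
  let T : Fin K → Set (P × A × P) := fun j => {z | ¬ BD.Bad lv M.δ j z.2.1 (BD.emb z.2.2)}
  have hsol : ∀ u : ℕ → A, ∃ t : ℕ → Q → ℕ∞, ∀ i q, t i q = BD.step lv M.δ (u i) (t (i+1)) q := by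
    intro u
    obtain ⟨t, ht⟩ := BD.exists_sol lv M.δ u K
    exact ⟨t, fun i q => ht i q (hK q)⟩
  have huniq : ∀ (u : ℕ → A) (r : ℕ → P), IsBackRun ρ u r → GTBFinal T u r →
      ∀ t : ℕ → Q → ℕ∞, (∀ i q, t i q = BD.step lv M.δ (u i) (t (i+1)) q) →
      ∀ i, r i = BD.rk lv (t i) ∧ BD.Eqv lv (BD.emb (r i)) (t i) := by
    intro u r hr hf t ht i
    have hx : ∀ i, BD.Eqv lv (BD.emb (r i)) (BD.step lv M.δ (u i) (BD.emb (r (i+1)))) := by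
      intro i
      rw [hr i]
      exact (BD.emb_rk lv _).symm
    have := BD.run_eqv lv M.δ u t (fun i => BD.emb (r i)) ht hx (by
      intro j m
      by_cases hj : j < K
      · exact hf ⟨j, hj⟩ m
      · refine ⟨m, le_rfl, ?_⟩
        rintro ⟨q, _, hq, _⟩
        have := hK q
        omega) i
    refine ⟨?_, this⟩
    rw [hr i]
    exact BD.rk_congr lv ((hx i).symm.trans lv this)
  refine ⟨P, inferInstance, ρ, K, T,
    {p | ∃ q ∈ I, (BD.emb p q ≠ ⊤ ↔ ¬ Odd (lv q))}, ?_, ?_, ?_⟩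
  · simp [P]
  · intro u
    obtain ⟨t, ht⟩ := hsol u
    refine ⟨fun i => BD.rk lv (t i), ⟨?_, ?_⟩, ?_⟩
    · intro i
      have e : t i = BD.step lv M.δ (u i) (t (i+1)) := funext (ht i)
      change BD.rk lv (t i) = BD.rk lv _
      rw [e]
      exact BD.rk_congr lv (BD.step_eqv lv M.δ (BD.emb_rk lv _) _)
    · intro j m
      obtain ⟨i, hi, hb⟩ := BD.sol_final lv M.δ u t ht j m
      exact ⟨i, hi, fun h => hb (BD.bad_eqv lv M.δ (BD.emb_rk lv _).symm _ _ h)⟩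
    · rintro r ⟨hr, hf⟩
      funext i
      exact (huniq u r hr hf t ht i).1
  · intro u r hr hf
    obtain ⟨t, ht⟩ := hsol u
    have h := (huniq u r hr hf t ht 0).2
    refine exists_congr fun q => and_congr_right fun _ => ?_
    rw [ne_eq, h.1 q]
    exact ⟨BD.acc_of lv M hlv hR u t ht 0 q, BD.of_acc lv M hlv hR u t ht 0 q⟩
end
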